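/- arXiv:2207.01235 — 2 statements merged into one kernel-verified Lean document; each statement's English description precedes it below -/
import Mathlib

section
/- Let d ≥ 1 and let μ, ν be Borel probability measures on ℝ^d with finite second moments. Then μ and ν are in convex order (μ ≼_c ν) if and only if for every Borel probability measure ρ on ℝ^d with bounded support and every point z ∈ ℝ^d one has W₂(ν,ρ)² − W₂(μ,ρ)² ≤ W₂(ν,δ_z)² − W₂(μ,δ_z)², where δ_z denotes the Dirac measure at z. -/
open MeasureTheory Metric

noncomputable section

/-- The set of couplings of two measures on `ℝ^d`. -/
def Couplings {d : ℕ} (α β : Measure (EuclideanSpace ℝ (Fin d))) :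
    Set (Measure (EuclideanSpace ℝ (Fin d) × EuclideanSpace ℝ (Fin d))) :=
  {π | π.map Prod.fst = α ∧ π.map Prod.snd = β}

/-- The squared 2-Wasserstein distance `W₂(α,β)² = inf_{π ∈ Π(α,β)} ∫ |x-y|² dπ`. -/
def W2sq {d : ℕ} (α β : Measure (EuclideanSpace ℝ (Fin d))) : ℝ :=
  sInf {r : ℝ | ∃ π ∈ Couplings α β, r = ∫ p, ‖p.1 - p.2‖ ^ 2 ∂π}

/-- Convex order: `∫ f dμ ≤ ∫ f dν` for all convex `f` integrable w.r.t. both. -/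
def ConvexOrder {d : ℕ} (μ ν : Measure (EuclideanSpace ℝ (Fin d))) : Prop :=
  ∀ f : EuclideanSpace ℝ (Fin d) → ℝ, ConvexOn ℝ Set.univ f →
    Integrable f μ → Integrable f ν → ∫ x, f x ∂μ ≤ ∫ x, f x ∂ν


section helpers

variable {E : Type*} [NormedAddCommGroup E] [InnerProductSpace ℝ E] [FiniteDimensional ℝ E]
  [MeasurableSpace E] [BorelSpace E]

lemma aux_int_comp {X Y : Type*} [MeasurableSpace X] [MeasurableSpace Y] {π : Measure X}
    {α : Measure Y} {T : X → Y} (hT : Measurable T) (h : π.map T = α) {f : Y → ℝ}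
    (hf : Integrable f α) : Integrable (fun p => f (T p)) π ∧ ∫ p, f (T p) ∂π = ∫ x, f x ∂α := by
  subst h
  exact ⟨(integrable_map_measure hf.1 hT.aemeasurable).1 hf,
    (integral_map hT.aemeasurable hf.1).symm⟩

lemma aux_inner_int {X : Type*} [MeasurableSpace X] {π : Measure X} {u v : X → E}
    (hu : Measurable u) (hv : Measurable v)
    (hu2 : Integrable (fun p => ‖u p‖ ^ 2) π) (hv2 : Integrable (fun p => ‖v p‖ ^ 2) π) :
    Integrable (fun p => inner ℝ (u p) (v p)) π := by
  refine Integrable.mono' (hu2.add hv2) (hu.inner hv).aestronglyMeasurable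
    (Filter.Eventually.of_forall fun p => ?_)
  have h1 := norm_inner_le_norm (𝕜 := ℝ) (u p) (v p)
  simp only [Pi.add_apply]
  nlinarith [sq_nonneg (‖u p‖ - ‖v p‖), sq_nonneg (‖u p‖), sq_nonneg (‖v p‖)]

lemma aux_prob {X Y : Type*} [MeasurableSpace X] [MeasurableSpace Y] {π : Measure X}
    {α : Measure Y} [IsProbabilityMeasure α] {T : X → Y} (hT : Measurable T) (h : π.map T = α) :
    IsProbabilityMeasure π := by
  constructor
  have := measure_univ (μ := α)
  rwa [← h, Measure.map_apply hT MeasurableSet.univ, Set.preimage_univ] at this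

lemma aux_lin_int {α : Measure E} [IsProbabilityMeasure α]
    (h : Integrable (fun x => ‖x‖ ^ 2) α) (y : E) : Integrable (fun x => inner ℝ x y) α :=
  aux_inner_int measurable_id measurable_const h (integrable_const _)

/-- expansion of the quadratic cost -/
lemma aux_expand {α β : Measure E} {π : Measure (E × E)}
    (h1 : π.map Prod.fst = α) (h2 : π.map Prod.snd = β)
    (hα : Integrable (fun x => ‖x‖ ^ 2) α) (hβ : Integrable (fun x => ‖x‖ ^ 2) β) :
    Integrable (fun p : E × E => inner ℝ p.1 p.2) π ∧
    ∫ p, ‖p.1 - p.2‖ ^ 2 ∂π =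
      ∫ x, ‖x‖ ^ 2 ∂α + ∫ x, ‖x‖ ^ 2 ∂β - 2 * ∫ p, inner ℝ p.1 p.2 ∂π := by
  obtain ⟨a1, a2⟩ := aux_int_comp measurable_fst h1 hα
  obtain ⟨b1, b2⟩ := aux_int_comp measurable_snd h2 hβ
  have hi := aux_inner_int measurable_fst measurable_snd a1 b1
  refine ⟨hi, ?_⟩
  rw [← a2, ← b2, ← integral_add a1 b1, ← integral_const_mul]
  refine Eq.trans ?_ (integral_sub (a1.add b1) (hi.const_mul 2))
  congr 1
  ext p
  rw [norm_sub_sq_real]; ring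

/-- coupling built from a fractional partition -/
lemma aux_coupling {ι : Type*} [Fintype ι] (ν : Measure E) [IsProbabilityMeasure ν]
    (hν : Integrable (fun x => ‖x‖ ^ 2) ν) (h : ι → E → ℝ) (hm : ∀ i, Measurable (h i))
    (h0 : ∀ i x, 0 ≤ h i x) (h1 : ∀ x, ∑ i, h i x = 1) (κ : ι → Measure E)
    [∀ i, IsProbabilityMeasure (κ i)] (G : E → E) (y : ι → E)
    (hG : ∀ i, ∀ᵐ z ∂κ i, G z = y i) :
    ∃ π : Measure (E × E), π.map Prod.fst = ν ∧
      π.map Prod.snd = ∑ i, ENNReal.ofReal (∫ x, h i x ∂ν) • κ i ∧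
      ∫ p, inner ℝ p.1 (G p.2) ∂π = ∑ i, ∫ x, h i x * inner ℝ x (y i) ∂ν := by
  have hle : ∀ i x, h i x ≤ 1 := fun i x => by
    rw [← h1 x]; exact Finset.single_le_sum (fun j _ => h0 j x) (Finset.mem_univ i)
  have hint : ∀ i, Integrable (h i) ν := fun i =>
    Integrable.mono' (integrable_const (1:ℝ)) (hm i).aestronglyMeasurable
      (Filter.Eventually.of_forall fun x => by
        rw [Real.norm_eq_abs, abs_of_nonneg (h0 i x)]; exact hle i x)
  have hmo : ∀ i, Measurable (fun x => ENNReal.ofReal (h i x)) := fun i => (hm i).ennreal_ofReal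
  let D : ι → Measure E := fun i => ν.withDensity (fun x => ENNReal.ofReal (h i x))
  have hD : ∀ i, D i Set.univ = ENNReal.ofReal (∫ x, h i x ∂ν) := fun i => by
    rw [ofReal_integral_eq_lintegral_ofReal (hint i) (Filter.Eventually.of_forall (h0 i))]
    simp [D]
  have hfin : ∀ i, IsFiniteMeasure (D i) := fun i => ⟨by rw [hD]; exact ENNReal.ofReal_lt_top⟩
  refine ⟨∑ i, (D i).prod (κ i), ?_, ?_, ?_⟩
  · rw [Measure.map_finset_sum measurable_fst.aemeasurable]
    simp only [Measure.map_fst_prod, measure_univ, one_smul]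
    ext s hs
    simp only [Measure.finsetSum_apply, D, withDensity_apply _ hs]
    rw [← lintegral_finsetSum _ (fun i _ => hmo i)]
    have : ∀ x, ∑ i, ENNReal.ofReal (h i x) = 1 := fun x => by
      rw [← ENNReal.ofReal_sum_of_nonneg (fun i _ => h0 i x), h1 x, ENNReal.ofReal_one]
    simp [this]
  · rw [Measure.map_finset_sum measurable_snd.aemeasurable]
    simp only [Measure.map_snd_prod, hD]
  · have hae : ∀ i, (fun p : E × E => inner ℝ p.1 (G p.2)) =ᵐ[(D i).prod (κ i)]
        (fun p => inner ℝ p.1 (y i)) := fun i => by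
      have : ∀ᵐ p ∂((D i).prod (κ i)), G p.2 = y i :=
        Measure.quasiMeasurePreserving_snd.ae (hG i)
      filter_upwards [this] with p hp
      rw [hp]
    have hlin := fun i => aux_lin_int hν (y i)
    have hDi : ∀ i, Integrable (fun x => inner ℝ x (y i)) (D i) := fun i => by
      refine (hlin i).mono_measure ?_
      refine (withDensity_mono (Filter.Eventually.of_forall fun x => ?_)).trans withDensity_one.le
      simpa using hle i x
    have hmf : ∀ i, ((D i).prod (κ i)).map Prod.fst = D i := fun i => by simp
    rw [integral_finsetSum_measure]
    · refine Finset.sum_congr rfl fun i _ => ?_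
      rw [integral_congr_ae (hae i), (aux_int_comp measurable_fst (hmf i) (hDi i)).2,
        integral_withDensity_eq_integral_toReal_smul (hmo i) (by simp)]
      simp [ENNReal.toReal_ofReal, h0]
    · intro i _
      exact (integrable_congr (hae i)).2 (aux_int_comp measurable_fst (hmf i) (hDi i)).1

/-- fractional partitions -/
structure FracPart {ι : Type*} [Fintype ι] (h : ι → E → ℝ) : Prop where
  meas : ∀ i, Measurable (h i)
  nonneg : ∀ i x, 0 ≤ h i x
  sum : ∀ x, ∑ i, h i x = 1

lemma FracPart.le_one {ι : Type*} [Fintype ι] {h : ι → E → ℝ} (H : FracPart h) (i : ι) (x : E) :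
    h i x ≤ 1 := by
  rw [← H.sum x]; exact Finset.single_le_sum (fun j _ => H.nonneg j x) (Finset.mem_univ i)

lemma FracPart.int_mul {ι : Type*} [Fintype ι] {h : ι → E → ℝ} (H : FracPart h)
    {α : Measure E} {f : E → ℝ} (hf : Integrable f α) (i : ι) :
    Integrable (fun x => h i x * f x) α := by
  refine Integrable.mono hf ((H.meas i).aestronglyMeasurable.mul hf.1)
    (Filter.Eventually.of_forall fun x => ?_)
  rw [norm_mul, Real.norm_eq_abs, abs_of_nonneg (H.nonneg i x)]
  exact mul_le_of_le_one_left (norm_nonneg _) (H.le_one i x)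

lemma FracPart.int {ι : Type*} [Fintype ι] {h : ι → E → ℝ} (H : FracPart h)
    {α : Measure E} [IsProbabilityMeasure α] (i : ι) :
    Integrable (h i) α := by
  simpa using H.int_mul (integrable_const (1 : ℝ)) i

lemma aux_max {ι : Type*} [Fintype ι] [Nonempty ι] (y : ι → E) (c : ι → ℝ) :
    ∃ M : E → ℝ, Continuous M ∧ ConvexOn ℝ Set.univ M ∧
      (∀ i x, inner ℝ x (y i) + c i ≤ M x) ∧
      (∀ x, ∃ i, M x = inner ℝ x (y i) + c i) ∧
      (∃ h : ι → E → ℝ, FracPart h ∧ ∀ x, ∑ i, h i x * (inner ℝ x (y i) + c i) = M x) ∧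
      ∀ α : Measure E, IsProbabilityMeasure α → Integrable (fun x => ‖x‖ ^ 2) α →
        Integrable M α := by
  classical
  let v : ι → E → ℝ := fun i x => inner ℝ x (y i) + c i
  let M : E → ℝ := fun x => Finset.univ.sup' Finset.univ_nonempty (fun i => v i x)
  have hvc : ∀ i, Continuous (v i) := fun i => by fun_prop
  have hMc : Continuous M := Continuous.finset_sup'_apply _ (fun i _ => hvc i)
  have hle : ∀ i x, v i x ≤ M x := fun i x =>
    Finset.le_sup' (fun i => v i x) (Finset.mem_univ i)
  have hex : ∀ x, ∃ i, M x = v i x := fun x => by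
    obtain ⟨i, _, hi⟩ := Finset.exists_mem_eq_sup' (s := Finset.univ) Finset.univ_nonempty
      (fun i => v i x)
    exact ⟨i, hi⟩
  refine ⟨M, hMc, ?_, hle, hex, ?_, ?_⟩
  · refine ⟨convex_univ, fun x _ z _ a b ha hb hab => ?_⟩
    obtain ⟨i, hi⟩ := hex (a • x + b • z)
    rw [hi]
    have : v i (a • x + b • z) = a * v i x + b * v i z := by
      simp only [v, inner_add_left, inner_smul_left]
      simp only [RCLike.conj_to_real]
      linear_combination - hab * c i
    rw [this]
    simp only [smul_eq_mul]
    have h1 := mul_le_mul_of_nonneg_left (hle i x) ha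
    have h2 := mul_le_mul_of_nonneg_left (hle i z) hb
    linarith
  · let e : ι → E → ℝ := fun i => Set.indicator {x | v i x = M x} (fun _ => 1)
    have hem : ∀ i, Measurable (e i) := fun i =>
      measurable_const.indicator (isClosed_eq (hvc i) hMc).measurableSet
    have he0 : ∀ i x, 0 ≤ e i x := fun i x => Set.indicator_nonneg (fun _ _ => zero_le_one) _
    have hpos : ∀ x, 0 < ∑ i, e i x := fun x => by
      obtain ⟨i, hi⟩ := hex x
      refine Finset.sum_pos' (fun j _ => he0 j x) ⟨i, Finset.mem_univ i, ?_⟩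
      simp [e, hi]
    have hev : ∀ i x, e i x * v i x = e i x * M x := fun i x => by
      by_cases hx : v i x = M x
      · rw [hx]
      · simp [e, hx]
    refine ⟨fun i x => e i x / ∑ j, e j x, ⟨fun i => ?_, fun i x => ?_, fun x => ?_⟩, fun x => ?_⟩
    · exact (hem i).div (Finset.measurable_fun_sum _ fun j _ => hem j)
    · exact div_nonneg (he0 i x) (hpos x).le
    · rw [← Finset.sum_div, div_self (hpos x).ne']
    · change ∑ i, e i x / (∑ j, e j x) * v i x = M x
      have : ∀ i, e i x / (∑ j, e j x) * v i x = e i x / (∑ j, e j x) * M x := fun i => by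
        rw [div_mul_eq_mul_div, hev, div_mul_eq_mul_div]
      simp only [this]
      rw [← Finset.sum_mul, ← Finset.sum_div, div_self (hpos x).ne', one_mul]
  · intro α _ hα
    have hvi : ∀ i, Integrable (v i) α := fun i => (aux_lin_int hα (y i)).add (integrable_const _)
    refine Integrable.mono' (integrable_finsetSum Finset.univ fun i _ => (hvi i).norm)
      hMc.measurable.aestronglyMeasurable (Filter.Eventually.of_forall fun x => ?_)
    obtain ⟨i, hi⟩ := hex x
    rw [hi]
    exact Finset.single_le_sum (f := fun i => ‖v i x‖) (fun j _ => norm_nonneg _) (Finset.mem_univ i)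

lemma aux_semidisc {ι : Type*} [Fintype ι] (ν : Measure E) [IsProbabilityMeasure ν]
    (hν : Integrable (fun x => ‖x‖ ^ 2) ν) (y : ι → E) (p : ι → ℝ) (hp : ∀ i, 0 < p i)
    (hp1 : ∑ i, p i = 1) (t : ℝ)
    (H : ∀ l : ι → ℝ, ∃ h : ι → E → ℝ, FracPart h ∧
      t + ∑ i, l i * p i ≤ ∑ i, ∫ x, h i x * (inner ℝ x (y i) + l i) ∂ν)
    (ε : ℝ) (hε : 0 < ε) :
    ∃ h : ι → E → ℝ, FracPart h ∧ (∀ i, ∫ x, h i x ∂ν = p i) ∧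
      t - ε ≤ ∑ i, ∫ x, h i x * inner ℝ x (y i) ∂ν := by
  classical
  let V : (ι → E → ℝ) → ℝ := fun h => ∑ i, ∫ x, h i x * inner ℝ x (y i) ∂ν
  let C : Set ((ι → ℝ) × ℝ) := {q | ∃ h : ι → E → ℝ, FracPart h ∧
    (∀ i, q.1 i = ∫ x, h i x ∂ν) ∧ q.2 ≤ V h}
  have hlin := fun i => aux_lin_int hν (y i)
  -- affine combinations
  have hcomb : ∀ (h h' : ι → E → ℝ), FracPart h → FracPart h' → ∀ a b : ℝ, 0 ≤ a → 0 ≤ b →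
      a + b = 1 → FracPart (fun i x => a * h i x + b * h' i x) ∧
      (∀ i, ∫ x, (a * h i x + b * h' i x) ∂ν = a * ∫ x, h i x ∂ν + b * ∫ x, h' i x ∂ν) ∧
      V (fun i x => a * h i x + b * h' i x) = a * V h + b * V h' := by
    intro h h' hh hh' a b ha hb hab
    refine ⟨⟨fun i => ((hh.meas i).const_mul a).add ((hh'.meas i).const_mul b), fun i x =>
      add_nonneg (mul_nonneg ha (hh.nonneg i x)) (mul_nonneg hb (hh'.nonneg i x)), fun x => ?_⟩,
      fun i => ?_, ?_⟩
    · rw [Finset.sum_add_distrib, ← Finset.mul_sum, ← Finset.mul_sum, hh.sum, hh'.sum]; linarith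
    · rw [integral_add ((hh.int i).const_mul a) ((hh'.int i).const_mul b), integral_const_mul,
        integral_const_mul]
    · simp only [V]
      rw [Finset.mul_sum, Finset.mul_sum, ← Finset.sum_add_distrib]
      refine Finset.sum_congr rfl fun i _ => ?_
      rw [← integral_const_mul, ← integral_const_mul, ← integral_add
        ((hh.int_mul (hlin i) i).const_mul a) ((hh'.int_mul (hlin i) i).const_mul b)]
      congr 1; ext x; ring
  have hconst : ∀ q : ι → ℝ, (∀ i, 0 ≤ q i) → ∑ i, q i = 1 →
      FracPart (fun i (_ : E) => q i) := fun q h0 h1 =>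
    ⟨fun i => measurable_const, fun i _ => h0 i, fun _ => h1⟩
  have hVconst : ∀ q : ι → ℝ, V (fun i _ => q i) = ∑ i, q i * ∫ x, inner ℝ x (y i) ∂ν := by
    intro q
    simp only [V, integral_const_mul]
  have hCconv : Convex ℝ C := by
    rintro ⟨v, s⟩ ⟨h, hh, hv, hs⟩ ⟨v', s'⟩ ⟨h', hh', hv', hs'⟩ a b ha hb hab
    obtain ⟨k1, k2, k3⟩ := hcomb h h' hh hh' a b ha hb hab
    refine ⟨_, k1, fun i => ?_, ?_⟩
    · rw [k2]; simp only at hv hv'; simp [hv, hv']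
    · rw [k3]
      simp only [Prod.smul_mk, Prod.mk_add_mk, smul_eq_mul] at *
      gcongr
  have hmem : (p, t) ∈ closure C := by
    by_contra hn
    obtain ⟨f, u, hf1, hf2⟩ := geometric_hahn_banach_closed_point hCconv.closure isClosed_closure hn
    have hlt : ∀ q ∈ C, f q < f (p, t) := fun q hq => (hf1 q (subset_closure hq)).trans hf2
    let τ := f (0, 1)
    have hfe : ∀ v s, f (v, s) = ∑ i, v i * f (Pi.single i 1, 0) + s * τ := by
      intro v s
      have : ((v, s) : (ι → ℝ) × ℝ) = ∑ i, v i • ((Pi.single i 1 : ι → ℝ), (0 : ℝ)) + s • (0, 1) := by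
        ext j
        · simp [Prod.fst_sum, Finset.sum_apply, Pi.single_apply]
        · simp [Prod.snd_sum]
      rw [this, map_add, map_sum]
      simp only [map_smul, smul_eq_mul]; rfl
    have hτ : 0 < τ := by
      have := hlt (p, min (V fun i _ => p i) (t - 1))
        ⟨_, hconst p (fun i => (hp i).le) hp1, fun i => by simp, min_le_left _ _⟩
      rw [hfe, hfe] at this
      have h2 : min (V fun i _ => p i) (t - 1) < t := (min_le_right _ _).trans_lt (by linarith)
      by_contra hc
      push Not at hc
      nlinarith
    obtain ⟨h, hh, hle⟩ := H (fun i => f (Pi.single i 1, 0) / τ)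
    have h3 := hlt (fun i => ∫ x, h i x ∂ν, V h) ⟨h, hh, fun i => rfl, le_rfl⟩
    rw [hfe, hfe] at h3
    have h4 : ∑ i, ∫ x, h i x * (inner ℝ x (y i) + f (Pi.single i 1, 0) / τ) ∂ν =
        V h + ∑ i, (∫ x, h i x ∂ν) * (f (Pi.single i 1, 0) / τ) := by
      simp only [V]
      rw [← Finset.sum_add_distrib]
      refine Finset.sum_congr rfl fun i _ => ?_
      rw [← integral_mul_const, ← integral_add (hh.int_mul (hlin i) i) ((hh.int i).mul_const _)]
      congr 1; ext x; ring
    rw [h4] at hle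
    have h5 := mul_le_mul_of_nonneg_right hle hτ.le
    rw [add_mul, add_mul, Finset.sum_mul, Finset.sum_mul (f := fun i => (∫ x, h i x ∂ν) * (f (Pi.single i 1, 0) / τ))] at h5
    have h6 : ∀ i, f (Pi.single i 1, 0) / τ * p i * τ = p i * f (Pi.single i 1, 0) := fun i => by
      field_simp
    have h7 : ∀ i, (∫ x, h i x ∂ν) * (f (Pi.single i 1, 0) / τ) * τ =
        (∫ x, h i x ∂ν) * f (Pi.single i 1, 0) := fun i => by
      field_simp
    simp only [h6, h7] at h5
    linarith
  -- repair the marginal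
  let m : ι → ℝ := fun i => ∫ x, inner ℝ x (y i) ∂ν
  let K := ∑ i, p i * m i
  obtain ⟨θ, hθ0, hθ1, hθ⟩ : ∃ θ : ℝ, 0 < θ ∧ θ < 1 ∧ t - ε < θ * t + (1 - θ) * K := by
    have hA : 0 < |K - t| + 1 := by positivity
    let r := min (1/2) (ε / (2 * (|K - t| + 1)))
    have hr0 : 0 < r := lt_min (by norm_num) (by positivity)
    have hr1 : r ≤ 1/2 := min_le_left _ _
    have hr2 : r * (2 * (|K - t| + 1)) ≤ ε := by
      have : r ≤ ε / (2 * (|K - t| + 1)) := min_le_right _ _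
      rwa [le_div_iff₀ (by positivity)] at this
    refine ⟨1 - r, by linarith, by linarith, ?_⟩
    have := neg_abs_le (K - t)
    nlinarith
  let U : Set ((ι → ℝ) × ℝ) := (⋂ i, {q | θ * q.1 i < p i}) ∩
    {q | t - ε < θ * q.2 + ∑ i, (p i - θ * q.1 i) * m i}
  have hU : IsOpen U := by
    refine IsOpen.inter (isOpen_iInter_of_finite fun i => ?_) ?_
    · exact isOpen_lt (by fun_prop) (by fun_prop)
    · exact isOpen_lt (by fun_prop) (by fun_prop)
  have hpU : (p, t) ∈ U := by
    refine ⟨Set.mem_iInter.2 fun i => ?_, ?_⟩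
    · have := hp i
      simp only [Set.mem_ofPred_eq]; nlinarith
    · simp only [Set.mem_ofPred_eq]
      have : ∑ i, (p i - θ * p i) * m i = (1 - θ) * K := by
        rw [Finset.mul_sum]; exact Finset.sum_congr rfl fun i _ => by ring
      rw [this]; exact hθ
  obtain ⟨⟨v, s⟩, ⟨hq1, hq2⟩, h, hh, hv, hs⟩ := mem_closure_iff.1 hmem U hU hpU
  simp only [Set.mem_iInter, Set.mem_ofPred_eq] at hq1 hq2 hv hs
  have hvs : ∑ i, v i = 1 := by
    simp only [hv]
    rw [← integral_finsetSum _ (fun i _ => hh.int i)]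
    simp [hh.sum]
  have h1θ : 0 < 1 - θ := by linarith
  let q : ι → ℝ := fun i => (p i - θ * v i) / (1 - θ)
  have hq : FracPart (fun i (_ : E) => q i) := hconst q
    (fun i => div_nonneg (by linarith [hq1 i]) h1θ.le) (by
      simp only [q]
      rw [← Finset.sum_div, Finset.sum_sub_distrib, ← Finset.mul_sum, hvs, hp1, mul_one,
        div_self h1θ.ne'])
  obtain ⟨k1, k2, k3⟩ := hcomb h _ hh hq θ (1 - θ) hθ0.le h1θ.le (by ring)
  refine ⟨_, k1, fun i => ?_, ?_⟩
  · rw [k2, ← hv]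
    simp only [integral_const, probReal_univ, one_smul, q]
    field_simp
    ring
  · change _ ≤ V _
    rw [k3, hVconst]
    have : ∀ i, (1 - θ) * (q i * m i) = (p i - θ * v i) * m i := fun i => by
      simp only [q]; field_simp
    have e2 : (1 - θ) * ∑ i, q i * ∫ x, inner ℝ x (y i) ∂ν = ∑ i, (p i - θ * v i) * m i := by
      rw [Finset.mul_sum]
      exact Finset.sum_congr rfl fun i _ => this i
    rw [e2]
    have := mul_le_mul_of_nonneg_left hs hθ0.le
    linarith

lemma aux_err {α ρ : Measure E} {π : Measure (E × E)}
    (h1 : π.map Prod.fst = α) (h2 : π.map Prod.snd = ρ)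
    (hα : Integrable (fun x => ‖x‖ ^ 2) α) (hρ : Integrable (fun x => ‖x‖ ^ 2) ρ)
    (g : E → E) (hg : Measurable g) (hg2 : Integrable (fun x => ‖g x‖ ^ 2) ρ)
    (η : ℝ) (hη : 0 < η) (hd2 : Integrable (fun x => ‖x - g x‖ ^ 2) ρ)
    (hd : ∫ x, ‖x - g x‖ ^ 2 ∂ρ ≤ η ^ 2) :
    Integrable (fun p : E × E => inner ℝ p.1 (g p.2)) π ∧
    |∫ p, inner ℝ p.1 p.2 ∂π - ∫ p, inner ℝ p.1 (g p.2) ∂π| ≤ η * (∫ x, ‖x‖ ^ 2 ∂α + 1) := by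
  obtain ⟨a1, a2⟩ := aux_int_comp measurable_fst h1 hα
  obtain ⟨b1, b2⟩ := aux_int_comp measurable_snd h2 hρ
  obtain ⟨c1, c2⟩ := aux_int_comp measurable_snd h2 hg2
  obtain ⟨d1, d2⟩ := aux_int_comp measurable_snd h2 hd2
  have hi := aux_inner_int measurable_fst measurable_snd a1 b1
  have hj := aux_inner_int measurable_fst (hg.comp measurable_snd) a1 c1
  refine ⟨hj, ?_⟩
  have hj' : Integrable (fun p : E × E => inner ℝ p.1 (g p.2)) π := hj
  rw [← integral_sub hi hj']
  have key : ∀ p : E × E, ‖inner ℝ p.1 p.2 - inner ℝ p.1 (g p.2)‖ ≤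
      η * ‖p.1‖ ^ 2 + η⁻¹ * ‖p.2 - g p.2‖ ^ 2 := fun p => by
    rw [← inner_sub_right]
    refine (norm_inner_le_norm _ _).trans ?_
    have e : η * ‖p.1‖ ^ 2 + η⁻¹ * ‖p.2 - g p.2‖ ^ 2 - ‖p.1‖ * ‖p.2 - g p.2‖ =
        η⁻¹ * ((η * ‖p.1‖ - ‖p.2 - g p.2‖ / 2) ^ 2 + 3 / 4 * ‖p.2 - g p.2‖ ^ 2) := by
      field_simp; ring
    have : 0 ≤ η⁻¹ * ((η * ‖p.1‖ - ‖p.2 - g p.2‖ / 2) ^ 2 + 3 / 4 * ‖p.2 - g p.2‖ ^ 2) := by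
      positivity
    linarith
  have hb := norm_integral_le_of_norm_le ((a1.const_mul η).add (d1.const_mul η⁻¹))
    (Filter.Eventually.of_forall key)
  rw [Real.norm_eq_abs] at hb
  refine hb.trans ?_
  have e3 : ∫ p : E × E, ((fun p : E × E => η * ‖p.1‖ ^ 2) + fun p : E × E => η⁻¹ * ‖p.2 - g p.2‖ ^ 2) p ∂π =
      η * ∫ x, ‖x‖ ^ 2 ∂α + η⁻¹ * ∫ x, ‖x - g x‖ ^ 2 ∂ρ := by
    rw [integral_add' (a1.const_mul η) (d1.const_mul η⁻¹), integral_const_mul, integral_const_mul,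
      a2, d2]
  have e4 : η⁻¹ * ∫ x, ‖x - g x‖ ^ 2 ∂ρ ≤ η⁻¹ * η ^ 2 := by gcongr
  have e5 : η⁻¹ * η ^ 2 = η := by field_simp
  refine e3.le.trans ?_
  linarith

lemma aux_simple {ρ : Measure E} [IsProbabilityMeasure ρ]
    (hρ : Integrable (fun x => ‖x‖ ^ 2) ρ) (η : ℝ) (hη : 0 < η) :
    ∃ g : SimpleFunc E E, Integrable (fun x => ‖g x‖ ^ 2) ρ ∧
      Integrable (fun x => ‖x - g x‖ ^ 2) ρ ∧ ∫ x, ‖x - g x‖ ^ 2 ∂ρ ≤ η ^ 2 := by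
  have hid : MemLp (id : E → E) 2 ρ :=
    (memLp_two_iff_integrable_sq_norm measurable_id.aestronglyMeasurable).2 hρ
  obtain ⟨g, hg, hg2⟩ := hid.exists_simpleFunc_eLpNorm_sub_lt (by simp)
    (ε := ENNReal.ofReal η) (by simpa using hη)
  have hs := hid.sub hg2
  refine ⟨g, (memLp_two_iff_integrable_sq_norm hg2.1).1 hg2,
    (memLp_two_iff_integrable_sq_norm hs.1).1 hs, ?_⟩
  rw [hs.eLpNorm_eq_integral_rpow_norm (by simp) (by simp)] at hg
  have h0 : 0 ≤ ∫ x, ‖x - g x‖ ^ 2 ∂ρ := integral_nonneg fun x => by positivity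
  have h1 := (ENNReal.ofReal_lt_ofReal_iff hη).1 hg
  simp only [Pi.sub_apply, id, ENNReal.toReal_ofNat, Real.rpow_two] at h1
  have h2 : (∫ x, ‖x - g x‖ ^ 2 ∂ρ) = ((∫ x, ‖x - g x‖ ^ 2 ∂ρ) ^ (2:ℝ)⁻¹) ^ 2 := by
    rw [← Real.rpow_natCast, ← Real.rpow_mul h0]; norm_num
  rw [h2]
  gcongr

lemma aux_forward {μ ν ρ : Measure E} [IsProbabilityMeasure μ] [IsProbabilityMeasure ν]
    [IsProbabilityMeasure ρ]
    (hμ : Integrable (fun x => ‖x‖ ^ 2) μ) (hν : Integrable (fun x => ‖x‖ ^ 2) ν)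
    (hρ : Integrable (fun x => ‖x‖ ^ 2) ρ)
    (hc : ∀ f : E → ℝ, ConvexOn ℝ Set.univ f → Integrable f μ → Integrable f ν →
      ∫ x, f x ∂μ ≤ ∫ x, f x ∂ν)
    {π : Measure (E × E)} (h1 : π.map Prod.fst = μ) (h2 : π.map Prod.snd = ρ)
    (ε : ℝ) (hε : 0 < ε) :
    ∃ π' : Measure (E × E), π'.map Prod.fst = ν ∧ π'.map Prod.snd = ρ ∧
      ∫ p, inner ℝ p.1 p.2 ∂π - ε ≤ ∫ p, inner ℝ p.1 p.2 ∂π' := by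
  classical
  have hmμ : 0 ≤ ∫ x, ‖x‖ ^ 2 ∂μ := integral_nonneg fun x => by positivity
  have hmν : 0 ≤ ∫ x, ‖x‖ ^ 2 ∂ν := integral_nonneg fun x => by positivity
  let B := ∫ x, ‖x‖ ^ 2 ∂μ + ∫ x, ‖x‖ ^ 2 ∂ν + 2
  have hB : 0 < B := by positivity
  let η := ε / (2 * B)
  have hη : 0 < η := by positivity
  have hηB : η * B = ε / 2 := by simp only [η]; field_simp
  obtain ⟨g, hg2, hd2, hd⟩ := aux_simple hρ η hη
  obtain ⟨hgi, herr⟩ := aux_err h1 h2 hμ hρ g g.measurable hg2 η hη hd2 hd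
  let S : Finset E := g.range.filter (fun z => ρ (g ⁻¹' {z}) ≠ 0)
  let A : S → Set E := fun i => g ⁻¹' {i.1}
  have hA : ∀ i, MeasurableSet (A i) := fun i => g.measurableSet_preimage _
  have hA0 : ∀ i, ρ (A i) ≠ 0 := fun i => (Finset.mem_filter.1 i.2).2
  let p : S → ℝ := fun i => ρ.real (A i)
  have hpo : ∀ i, ENNReal.ofReal (p i) = ρ (A i) := fun i => ofReal_measureReal
  have hp : ∀ i, 0 < p i := fun i => by
    have := hA0 i
    rw [← hpo] at this
    simpa using this
  have hsum : ∑ i, ρ.restrict (A i) = ρ := by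
    ext s hs
    have e1 := g.sum_range_measure_preimage_singleton (ρ.restrict s)
    rw [Measure.restrict_apply_univ] at e1
    rw [Measure.finsetSum_apply, ← e1]
    have e2 : ∀ i : S, ρ.restrict (A i) s = (fun z => ρ.restrict s (g ⁻¹' {z})) i.1 := fun i => by
      simp only
      rw [Measure.restrict_apply hs, Measure.restrict_apply (hA i), Set.inter_comm]
    simp only [e2]
    rw [Finset.sum_coe_sort S (fun z => ρ.restrict s (g ⁻¹' {z}))]
    refine Finset.sum_subset (Finset.filter_subset _ _) fun z hz hzS => ?_
    have : ρ (g ⁻¹' {z}) = 0 := by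
      by_contra hne
      exact hzS (Finset.mem_filter.2 ⟨hz, hne⟩)
    exact le_antisymm ((Measure.restrict_apply_le _ _).trans this.le) bot_le
  have hp1 : ∑ i, p i = 1 := by
    have : (∑ i, ρ.restrict (A i)) Set.univ = 1 := by rw [hsum]; exact measure_univ
    rw [Measure.finsetSum_apply] at this
    simp only [Measure.restrict_apply_univ, ← hpo] at this
    rw [← ENNReal.ofReal_sum_of_nonneg (fun i _ => (hp i).le)] at this
    simpa using this
  have hne : Nonempty S := by
    by_contra hn
    rw [not_nonempty_iff] at hn
    simp at hp1
  have hgS : ∀ᵐ z ∂ρ, g z ∈ S := by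
    have : ∀ z ∈ g.range, ∀ᵐ w ∂ρ, z ∉ S → g w ≠ z := fun z hz => by
      by_cases hzS : z ∈ S
      · simp [hzS]
      · have h0 : ρ (g ⁻¹' {z}) = 0 := by
          by_contra hne
          exact hzS (Finset.mem_filter.2 ⟨hz, hne⟩)
        have := measure_eq_zero_iff_ae_notMem.1 h0
        filter_upwards [this] with w hw _ h
        exact hw h
    have := (Finset.eventually_all g.range).2 this
    filter_upwards [this] with w hw
    by_contra hc
    exact hw (g w) (g.mem_range_self w) hc rfl
  let y : S → E := fun i => i.1
  let t := ∫ p, inner ℝ p.1 (g p.2) ∂π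
  obtain ⟨h, hh, hhp, hht⟩ := aux_semidisc ν hν y p hp hp1 t (by
    intro l
    obtain ⟨M, hMc, hMconv, hMle, -, ⟨h, hh, hhM⟩, hMint⟩ := aux_max y l
    refine ⟨h, hh, ?_⟩
    have hterm : ∀ i, Integrable (fun x => inner ℝ x (y i) + l i) ν := fun i =>
      (aux_lin_int hν (y i)).add (integrable_const _)
    rw [← integral_finsetSum _ (fun i _ => hh.int_mul (hterm i) i)]
    simp only [hhM]
    refine le_trans ?_ (hc M hMconv (hMint μ ‹_› hμ) (hMint ν ‹_› hν))
    let Lf : E → ℝ := fun z => ∑ i, (A i).indicator (fun _ => l i) z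
    have hLi : ∀ i, Integrable ((A i).indicator (fun _ => l i)) ρ := fun i =>
      (integrable_const _).indicator (hA i)
    have hLint : Integrable Lf ρ := integrable_finsetSum _ fun i _ => hLi i
    have hLval : ∫ z, Lf z ∂ρ = ∑ i, l i * p i := by
      simp only [Lf]
      rw [integral_finsetSum _ fun i _ => hLi i]
      refine Finset.sum_congr rfl fun i _ => ?_
      rw [integral_indicator (hA i), setIntegral_const, smul_eq_mul, mul_comm]
    obtain ⟨k1, k2⟩ := aux_int_comp measurable_snd h2 hLint
    obtain ⟨m1, m2⟩ := aux_int_comp measurable_fst h1 (hMint μ ‹_› hμ)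
    rw [← hLval, ← k2, ← m2, ← integral_add hgi k1]
    refine integral_mono_ae (hgi.add k1) m1 ?_
    have hgS' : ∀ᵐ q ∂π, g q.2 ∈ S := by
      rw [← h2] at hgS
      exact ae_of_ae_map measurable_snd.aemeasurable hgS
    filter_upwards [hgS'] with q hq
    have hLq : Lf q.2 = l ⟨g q.2, hq⟩ := by
      simp only [Lf]
      rw [Finset.sum_eq_single ⟨g q.2, hq⟩]
      · simp [A]
      · intro j _ hj
        refine Set.indicator_of_notMem ?_ _
        intro hmem
        exact hj (Subtype.ext hmem.symm)
      · simp
    simp only [hLq]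
    exact hMle ⟨g q.2, hq⟩ q.1) (ε / 2) (by linarith)
  let κ : S → Measure E := fun i => ProbabilityTheory.cond ρ (A i)
  have hκ : ∀ i, IsProbabilityMeasure (κ i) := fun i =>
    ProbabilityTheory.cond_isProbabilityMeasure (hA0 i)
  obtain ⟨π', q1, q2, q3⟩ := aux_coupling ν hν h hh.meas hh.nonneg hh.sum κ g y (fun i => by
    refine Measure.ae_smul_measure ?_ _
    exact ae_restrict_mem (hA i))
  have q2' : π'.map Prod.snd = ρ := by
    rw [q2]
    refine Eq.trans (Finset.sum_congr rfl fun i _ => ?_) hsum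
    rw [hhp, hpo]
    simp only [κ, ProbabilityTheory.cond]
    rw [smul_smul, ENNReal.mul_inv_cancel (hA0 i) (measure_ne_top _ _), one_smul]
  refine ⟨π', q1, q2', ?_⟩
  obtain ⟨-, herr'⟩ := aux_err q1 q2' hν hρ g g.measurable hg2 η hη hd2 hd
  rw [← q3] at hht
  have a1 := (abs_le.1 herr).2
  have a2 := (abs_le.1 herr').1
  simp only [B] at hηB
  simp only [t] at hht
  nlinarith

lemma W2sq_le {d : ℕ} {α β : Measure (EuclideanSpace ℝ (Fin d))}
    {π : Measure (EuclideanSpace ℝ (Fin d) × EuclideanSpace ℝ (Fin d))}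
    (h1 : π.map Prod.fst = α) (h2 : π.map Prod.snd = β) :
    W2sq α β ≤ ∫ p, ‖p.1 - p.2‖ ^ 2 ∂π := by
  refine csInf_le ⟨0, ?_⟩ ⟨π, ⟨h1, h2⟩, rfl⟩
  rintro r ⟨π, -, rfl⟩
  exact integral_nonneg fun x => by positivity

lemma le_W2sq {d : ℕ} {α β : Measure (EuclideanSpace ℝ (Fin d))}
    [IsProbabilityMeasure α] [IsProbabilityMeasure β] (b : ℝ)
    (h : ∀ π : Measure (EuclideanSpace ℝ (Fin d) × EuclideanSpace ℝ (Fin d)),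
      π.map Prod.fst = α → π.map Prod.snd = β → b ≤ ∫ p, ‖p.1 - p.2‖ ^ 2 ∂π) :
    b ≤ W2sq α β := by
  refine le_csInf ⟨_, α.prod β, ⟨by simp, by simp⟩, rfl⟩ ?_
  rintro r ⟨π, ⟨h1, h2⟩, rfl⟩
  exact h π h1 h2

lemma W2sq_dirac {d : ℕ} {α : Measure (EuclideanSpace ℝ (Fin d))} [IsProbabilityMeasure α]
    (hα : Integrable (fun x => ‖x‖ ^ 2) α) (z : EuclideanSpace ℝ (Fin d)) :
    W2sq α (Measure.dirac z) = ∫ x, ‖x‖ ^ 2 ∂α + ‖z‖ ^ 2 - 2 * ∫ x, inner ℝ x z ∂α := by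
  have key : ∀ π : Measure (EuclideanSpace ℝ (Fin d) × EuclideanSpace ℝ (Fin d)),
      π.map Prod.fst = α → π.map Prod.snd = Measure.dirac z →
      ∫ p, ‖p.1 - p.2‖ ^ 2 ∂π = ∫ x, ‖x‖ ^ 2 ∂α + ‖z‖ ^ 2 - 2 * ∫ x, inner ℝ x z ∂α := by
    intro π h1 h2
    have hz : Integrable (fun x : EuclideanSpace ℝ (Fin d) => ‖x‖ ^ 2) (Measure.dirac z) :=
      integrable_dirac (by simp)
    rw [(aux_expand h1 h2 hα hz).2, integral_dirac]
    congr 2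
    rw [← (aux_int_comp measurable_fst h1 (aux_lin_int hα z)).2]
    refine integral_congr_ae ?_
    have : ∀ᵐ w ∂(π.map Prod.snd), w = z := by
      rw [h2, ae_dirac_eq]; exact Filter.eventually_pure.2 rfl
    filter_upwards [ae_of_ae_map measurable_snd.aemeasurable this] with p hp
    rw [hp]
  refine le_antisymm ?_ ?_
  · have h1 : (α.prod (Measure.dirac z)).map Prod.fst = α := by simp
    have h2 : (α.prod (Measure.dirac z)).map Prod.snd = Measure.dirac z := by simp
    rw [← key _ h1 h2]
    exact W2sq_le h1 h2
  · exact le_W2sq _ fun π h1 h2 => (key π h1 h2).ge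

lemma aux_back {d : ℕ} {μ ν : Measure (EuclideanSpace ℝ (Fin d))}
    [IsProbabilityMeasure μ] [IsProbabilityMeasure ν]
    (hμ : Integrable (fun x => ‖x‖ ^ 2) μ) (hν : Integrable (fun y => ‖y‖ ^ 2) ν)
    (H : ∀ ρ : Measure (EuclideanSpace ℝ (Fin d)), IsProbabilityMeasure ρ →
        (∃ R : ℝ, ρ (closedBall (0 : EuclideanSpace ℝ (Fin d)) R)ᶜ = 0) →
          W2sq ν ρ - W2sq μ ρ ≤ ∫ x, ‖x‖ ^ 2 ∂ν - ∫ x, ‖x‖ ^ 2 ∂μ)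
    {ι : Type*} [Fintype ι] (y : ι → EuclideanSpace ℝ (Fin d)) (hy : Function.Injective y)
    (c : ι → ℝ) (M : EuclideanSpace ℝ (Fin d) → ℝ)
    (hle : ∀ i x, inner ℝ x (y i) + c i ≤ M x)
    (h : ι → EuclideanSpace ℝ (Fin d) → ℝ) (hh : FracPart h)
    (hM : ∀ x, ∑ i, h i x * (inner ℝ x (y i) + c i) = M x)
    (hMν : Integrable M ν) :
    ∫ x, M x ∂μ ≤ ∫ x, M x ∂ν := by
  classical
  obtain ⟨π, h1, h2, h3⟩ := aux_coupling μ hμ h hh.meas hh.nonneg hh.sum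
    (fun i => Measure.dirac (y i)) id y (fun i => by
      rw [ae_dirac_eq]; exact Filter.eventually_pure.2 rfl)
  have hπ : IsProbabilityMeasure π := aux_prob measurable_fst h1
  let w : ι → ℝ := fun i => ∫ x, h i x ∂μ
  have hw : ∀ i, 0 ≤ w i := fun i => integral_nonneg (hh.nonneg i)
  let ρ : Measure (EuclideanSpace ℝ (Fin d)) :=
    ∑ i, ENNReal.ofReal (w i) • Measure.dirac (y i)
  have h2' : π.map Prod.snd = ρ := h2
  have hρ : IsProbabilityMeasure ρ := by
    rw [← h2']; exact Measure.isProbabilityMeasure_map measurable_snd.aemeasurable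
  have hint : ∀ f : EuclideanSpace ℝ (Fin d) → ℝ, Integrable f ρ := fun f =>
    integrable_finsetSum_measure.2 fun i _ =>
      (integrable_dirac (by simp)).smul_measure ENNReal.ofReal_ne_top
  have hval : ∀ f : EuclideanSpace ℝ (Fin d) → ℝ, ∫ x, f x ∂ρ = ∑ i, w i * f (y i) := fun f => by
    simp only [ρ]
    rw [integral_finsetSum_measure fun i _ =>
      (integrable_dirac (by simp)).smul_measure ENNReal.ofReal_ne_top]
    refine Finset.sum_congr rfl fun i _ => ?_
    rw [integral_smul_measure, integral_dirac, ENNReal.toReal_ofReal (hw i), smul_eq_mul]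
  have hnull : ∀ s : Set (EuclideanSpace ℝ (Fin d)), (∀ i, y i ∉ s) → ρ s = 0 := fun s hs => by
    simp only [ρ, Measure.finsetSum_apply]
    refine Finset.sum_eq_zero fun i _ => ?_
    simp [hs i]
  have hR : ρ (closedBall (0 : EuclideanSpace ℝ (Fin d)) (∑ i, ‖y i‖))ᶜ = 0 := by
    refine hnull _ fun i => ?_
    simp only [Set.mem_compl_iff, not_not, mem_closedBall, dist_zero_right]
    exact Finset.single_le_sum (f := fun i => ‖y i‖) (fun j _ => norm_nonneg _) (Finset.mem_univ i)
  have hyp := H ρ hρ ⟨_, hR⟩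
  have hρ2 := hint (fun x => ‖x‖ ^ 2)
  -- upper bound for the transport cost from `μ`
  have up := W2sq_le h1 h2'
  rw [(aux_expand h1 h2' hμ hρ2).2] at up
  have hterm : ∀ i, Integrable (fun x => inner ℝ x (y i) + c i) μ := fun i =>
    (aux_lin_int hμ (y i)).add (integrable_const _)
  have e1 : ∫ p, inner ℝ p.1 p.2 ∂π = ∫ x, M x ∂μ - ∑ i, w i * c i := by
    have e2 : ∫ x, M x ∂μ = ∑ i, ∫ x, h i x * (inner ℝ x (y i) + c i) ∂μ := by
      rw [← integral_finsetSum _ (fun i _ => hh.int_mul (hterm i) i)]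
      simp only [hM]
    have e3 : ∫ p, inner ℝ p.1 p.2 ∂π = ∑ i, ∫ x, h i x * inner ℝ x (y i) ∂μ := h3
    rw [e2, e3, ← Finset.sum_sub_distrib]
    refine Finset.sum_congr rfl fun i _ => ?_
    simp only [w]
    rw [← integral_mul_const, ← integral_sub (hh.int_mul (hterm i) i) ((hh.int i).mul_const _)]
    congr 1; ext x; ring
  -- lower bound for the transport cost from `ν`
  have lo : ∫ x, ‖x‖ ^ 2 ∂ν + ∫ x, ‖x‖ ^ 2 ∂ρ - 2 * (∫ x, M x ∂ν - ∑ i, w i * c i) ≤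
      W2sq ν ρ := by
    refine le_W2sq _ fun π' k1 k2 => ?_
    obtain ⟨i1, i2⟩ := aux_expand k1 k2 hν hρ2
    rw [i2]
    let cc : EuclideanSpace ℝ (Fin d) → ℝ := fun z => ∑ i, if z = y i then c i else 0
    have hcc : ∀ i, cc (y i) = c i := fun i => by
      simp only [cc, hy.eq_iff]
      simp
    obtain ⟨a1, a2⟩ := aux_int_comp measurable_fst k1 hMν
    obtain ⟨b1, b2⟩ := aux_int_comp measurable_snd k2 (hint cc)
    have : ∫ p, inner ℝ p.1 p.2 ∂π' ≤ ∫ x, M x ∂ν - ∑ i, w i * c i := by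
      have e4 : ∑ i, w i * c i = ∫ x, cc x ∂ρ := by
        rw [hval]; simp only [hcc]
      rw [e4, ← a2, ← b2, ← integral_sub a1 b1]
      refine integral_mono_ae i1 (a1.sub b1) ?_
      have hae : ∀ᵐ z ∂(π'.map Prod.snd), z ∈ Set.range y := by
        rw [k2]
        exact hnull _ fun i hi => hi ⟨i, rfl⟩
      filter_upwards [ae_of_ae_map measurable_snd.aemeasurable hae] with p hp
      obtain ⟨i, hi⟩ := hp
      have := hle i p.1
      simp only [← hi, hcc]
      linarith
    linarith
  rw [e1] at up
  linarith

end helpers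

theorem stmt3 (d : ℕ) (hd : 1 ≤ d)
    (μ ν : Measure (EuclideanSpace ℝ (Fin d)))
    [IsProbabilityMeasure μ] [IsProbabilityMeasure ν]
    (hμ : Integrable (fun x => ‖x‖ ^ 2) μ) (hν : Integrable (fun y => ‖y‖ ^ 2) ν) :
    ConvexOrder μ ν ↔
      ∀ ρ : Measure (EuclideanSpace ℝ (Fin d)), IsProbabilityMeasure ρ →
        (∃ R : ℝ, ρ (closedBall (0 : EuclideanSpace ℝ (Fin d)) R)ᶜ = 0) →
        ∀ z : EuclideanSpace ℝ (Fin d),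
          W2sq ν ρ - W2sq μ ρ ≤ W2sq ν (Measure.dirac z) - W2sq μ (Measure.dirac z) := by
  classical
  constructor
  · intro hc ρ hρ ⟨R, hR⟩ z
    have hρ2 : Integrable (fun x => ‖x‖ ^ 2) ρ := by
      refine Integrable.mono' (integrable_const (R ^ 2))
        (measurable_norm.pow_const 2).aestronglyMeasurable ?_
      have : ∀ᵐ x ∂ρ, x ∈ closedBall (0 : EuclideanSpace ℝ (Fin d)) R := hR
      filter_upwards [this] with x hx
      rw [mem_closedBall, dist_zero_right] at hx
      rw [Real.norm_eq_abs, abs_of_nonneg (by positivity)]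
      gcongr
    have hlin : ∀ z : EuclideanSpace ℝ (Fin d), ∫ x, inner ℝ x z ∂μ ≤ ∫ x, inner ℝ x z ∂ν := by
      intro z
      refine hc _ ⟨convex_univ, fun x _ x' _ a b _ _ _ => ?_⟩ (aux_lin_int hμ z) (aux_lin_int hν z)
      simp [inner_add_left, inner_smul_left]
    have hmean : ∫ x, inner ℝ x z ∂μ = ∫ x, inner ℝ x z ∂ν := by
      refine le_antisymm (hlin z) ?_
      have := hlin (-z)
      simp only [inner_neg_right, integral_neg] at this
      linarith
    rw [W2sq_dirac hμ, W2sq_dirac hν, hmean]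
    have key : W2sq ν ρ - (∫ x, ‖x‖ ^ 2 ∂ν - ∫ x, ‖x‖ ^ 2 ∂μ) ≤ W2sq μ ρ := by
      refine le_W2sq _ fun π h1 h2 => ?_
      refine le_of_forall_pos_le_add fun ε hε => ?_
      obtain ⟨π', k1, k2, k3⟩ := aux_forward hμ hν hρ2 hc h1 h2 (ε / 2) (by linarith)
      have := W2sq_le k1 k2
      rw [(aux_expand k1 k2 hν hρ2).2] at this
      rw [(aux_expand h1 h2 hμ hρ2).2]
      linarith
    linarith
  · intro H f hf hfμ hfν
    have H' : ∀ ρ : Measure (EuclideanSpace ℝ (Fin d)), IsProbabilityMeasure ρ →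
        (∃ R : ℝ, ρ (closedBall (0 : EuclideanSpace ℝ (Fin d)) R)ᶜ = 0) →
          W2sq ν ρ - W2sq μ ρ ≤ ∫ x, ‖x‖ ^ 2 ∂ν - ∫ x, ‖x‖ ^ 2 ∂μ := fun ρ h1 h2 => by
      have := H ρ h1 h2 0
      rw [W2sq_dirac hμ, W2sq_dirac hν] at this
      simpa using this
    have hfc : Continuous f := continuousOn_univ.1 (hf.continuousOn isOpen_univ)
    obtain ⟨l, c, hlc, hsup⟩ := hf.real_univ_sSup_of_nat_affine_eq hfc.lowerSemicontinuous
    let a : ℕ → EuclideanSpace ℝ (Fin d) := fun i => (InnerProductSpace.toDual ℝ _).symm (l i)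
    have hal : ∀ i x, inner ℝ x (a i) = l i x := fun i x => by
      rw [real_inner_comm]; simp [a]
    have hlc' : ∀ i x, inner ℝ x (a i) + c i ≤ f x := fun i x => by
      rw [hal]; exact hlc i x
    let b : EuclideanSpace ℝ (Fin d) → ℝ := fun y => ⨅ x, f x - inner ℝ x y
    have hbdd : ∀ i, BddBelow (Set.range fun x => f x - inner ℝ x (a i)) := fun i =>
      ⟨c i, by rintro _ ⟨x, rfl⟩; have := hlc' i x; simp only; linarith⟩
    have hb1 : ∀ i, c i ≤ b (a i) := fun i => le_ciInf fun x => by have := hlc' i x; linarith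
    have hb2 : ∀ i x, inner ℝ x (a i) + b (a i) ≤ f x := fun i x => by
      have := ciInf_le (hbdd i) x
      simp only [b]
      linarith
    let S : ℕ → Finset (EuclideanSpace ℝ (Fin d)) := fun n => (Finset.range (n + 1)).image a
    have hSne : ∀ n, Nonempty (S n) := fun n =>
      ⟨⟨a 0, Finset.mem_image.2 ⟨0, by simp, rfl⟩⟩⟩
    have hmax := fun n => aux_max (fun i : S n => i.1) (fun i : S n => b i.1)
    choose M hMall using hmax
    have hMc := fun n => (hMall n).1
    have hMle := fun n => (hMall n).2.2.1
    have hMex := fun n => (hMall n).2.2.2.1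
    have hMf : ∀ n x, M n x ≤ f x := fun n x => by
      obtain ⟨⟨i, hi⟩, hx⟩ := hMex n x
      obtain ⟨j, -, rfl⟩ := Finset.mem_image.1 hi
      rw [hx]
      exact hb2 j x
    have hMge : ∀ n i, i ≤ n → ∀ x, inner ℝ x (a i) + c i ≤ M n x := fun n i hi x => by
      have := hMle n ⟨a i, Finset.mem_image.2 ⟨i, Finset.mem_range.2 (by omega), rfl⟩⟩ x
      simp only at this
      linarith [hb1 i]
    have hlim : ∀ x, Filter.Tendsto (fun n => M n x) Filter.atTop (nhds (f x)) := fun x => by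
      rw [tendsto_order]
      refine ⟨fun r hr => ?_, fun r hr => Filter.Eventually.of_forall fun n => (hMf n x).trans_lt hr⟩
      have hx := congrFun hsup x
      rw [← hx, iSup_apply] at hr
      obtain ⟨i, hi⟩ := exists_lt_of_lt_ciSup hr
      filter_upwards [Filter.eventually_ge_atTop i] with n hn
      refine lt_of_lt_of_le hi ?_
      have := hMge n i hn x
      rw [hal] at this
      exact this
    have hdom : ∀ α : Measure (EuclideanSpace ℝ (Fin d)), IsProbabilityMeasure α →
        Integrable (fun x => ‖x‖ ^ 2) α → Integrable f α →
        Filter.Tendsto (fun n => ∫ x, M n x ∂α) Filter.atTop (nhds (∫ x, f x ∂α)) := by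
      intro α _ hα hfα
      have hl0 : Integrable (fun x => inner ℝ x (a 0) + c 0) α :=
        (aux_lin_int hα (a 0)).add (integrable_const _)
      refine tendsto_integral_of_dominated_convergence
        (fun x => ‖f x‖ + ‖inner ℝ x (a 0) + c 0‖)
        (fun n => (hMc n).measurable.aestronglyMeasurable) (hfα.norm.add hl0.norm)
        (fun n => Filter.Eventually.of_forall fun x => ?_) (Filter.Eventually.of_forall hlim)
      have u1 := hMf n x
      have u2 := hMge n 0 (Nat.zero_le n) x
      simp only [Real.norm_eq_abs]
      rw [abs_le]
      constructor
      · linarith [abs_nonneg (f x), neg_abs_le (inner ℝ x (a 0) + c 0)]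
      · linarith [le_abs_self (f x), abs_nonneg (inner ℝ x (a 0) + c 0)]
    refine le_of_tendsto_of_tendsto' (hdom μ ‹_› hμ hfμ) (hdom ν ‹_› hν hfν) fun n => ?_
    obtain ⟨h, hh1, hh2⟩ := (hMall n).2.2.2.2.1
    have hMint := (hMall n).2.2.2.2.2
    exact aux_back hμ hν H' (fun i : S n => i.1) Subtype.val_injective (fun i : S n => b i.1) (M n)
      (hMle n) h hh1 hh2 (hMint ν ‹_› hν)
end
end

section
/- Let d ≥ 1, let c(x,y) := |x−y|²/2, and let μ, ν be Borel probability measures on ℝ^d with finite second moments. Then ∫ g dν ≤ ∫ g dμ holds for every c-concave function g : ℝ^d → ℝ that is integrable with respect to both μ and ν, if and only if W₂(ν,ρ)² ≤ W₂(μ,ρ)² holds for every Borel probability measure ρ on ℝ^d with compact support. -/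
open MeasureTheory Metric

noncomputable section

/-- A function `g` is `c`-concave for the cost `c(x,y) = |x-y|²/2` iff
`x ↦ |x|²/2 - g(x)` is convex. -/
def CConcave {d : ℕ} (g : EuclideanSpace ℝ (Fin d) → ℝ) : Prop :=
  ConvexOn ℝ Set.univ (fun x => ‖x‖ ^ 2 / 2 - g x)


lemma lse_lower {ι : Type*} [Fintype ι] (z : ι → ℝ) (j : ι) :
    z j ≤ Real.log (∑ i, Real.exp (z i)) := by
  rw [Real.le_log_iff_exp_le]
  · exact Finset.single_le_sum (f := fun i => Real.exp (z i))
      (fun i _ => (Real.exp_pos _).le) (Finset.mem_univ j)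
  · exact Finset.sum_pos (fun i _ => Real.exp_pos _) ⟨j, Finset.mem_univ j⟩

lemma lse_le {ι : Type*} [Fintype ι] [Nonempty ι] (z z' : ι → ℝ) (t : ℝ)
    (h : ∀ i, z i ≤ z' i + t) :
    Real.log (∑ i, Real.exp (z i)) ≤ Real.log (∑ i, Real.exp (z' i)) + t := by
  have hp : ∀ z : ι → ℝ, 0 < ∑ i, Real.exp (z i) := fun z =>
    Finset.sum_pos (fun i _ => Real.exp_pos _) Finset.univ_nonempty
  rw [Real.log_le_iff_le_exp (hp z), Real.exp_add, Real.exp_log (hp z'), Finset.sum_mul]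
  refine Finset.sum_le_sum fun i _ => ?_
  rw [← Real.exp_add]
  exact Real.exp_le_exp.2 (h i)

/-- Entropic semi-discrete transport. -/
lemma softmax_exists {ι Ω : Type*} [Fintype ι] [Nonempty ι] [MeasurableSpace Ω]
    (ν : Measure Ω) [IsProbabilityMeasure ν] (f : ι → Ω → ℝ) (hfm : ∀ i, Measurable (f i))
    (hfi : ∀ i, Integrable (f i) ν) (w : ι → ℝ) (hw : ∀ i, 0 < w i) (hw1 : ∑ i, w i = 1) :
    ∃ (ψ : ι → ℝ) (h : ι → Ω → ℝ), (∀ i, Measurable (h i)) ∧ (∀ i x, 0 ≤ h i x) ∧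
      (∀ x, ∑ i, h i x = 1) ∧ (∀ i, ∫ x, h i x ∂ν = w i) ∧
      ∀ x j, f j x - ψ j - Fintype.card ι ≤ ∑ i, h i x * (f i x - ψ i) := by
  classical
  set L : (ι → ℝ) → Ω → ℝ := fun ψ x => Real.log (∑ i, Real.exp (f i x - ψ i)) with hL
  have hLm : ∀ ψ, Measurable (L ψ) := fun ψ => by
    simp only [hL]
    refine Real.measurable_log.comp (Finset.measurable_sum _ fun i _ => ?_)
    exact Real.measurable_exp.comp ((hfm i).sub_const _)
  have hLlow : ∀ ψ x j, f j x - ψ j ≤ L ψ x := fun ψ x j => lse_lower (fun i => f i x - ψ i) j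
  have hLle : ∀ ψ ψ' t x, (∀ i, ψ' i ≤ ψ i + t) → L ψ x ≤ L ψ' x + t := fun ψ ψ' t x h =>
    lse_le _ _ t (fun i => by have := h i; linarith)
  have hLi : ∀ ψ, Integrable (L ψ) ν := fun ψ => by
    have hb : Integrable (fun x => ∑ i, |f i x - ψ i| + |Real.log (Fintype.card ι)|) ν := by
      refine Integrable.add (integrable_finsetSum _ fun i _ => ?_) (integrable_const _)
      exact ((hfi i).sub (integrable_const _)).abs
    refine hb.mono' (hLm ψ).aestronglyMeasurable (Filter.Eventually.of_forall fun x => ?_)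
    have hs : ∀ j, |f j x - ψ j| ≤ ∑ i, |f i x - ψ i| := fun j =>
      Finset.single_le_sum (f := fun i => |f i x - ψ i|) (fun i _ => abs_nonneg _)
        (Finset.mem_univ j)
    rw [Real.norm_eq_abs, abs_le]
    constructor
    · obtain ⟨j⟩ := ‹Nonempty ι›
      have h1 := hLlow ψ x j
      have h2 := hs j
      have h3 := neg_abs_le (f j x - ψ j)
      have h4 := abs_nonneg (Real.log (Fintype.card ι))
      linarith
    · have h1 := lse_le (fun i => f i x - ψ i) (fun _ => 0) (∑ i, |f i x - ψ i|)
        (fun i => by have := hs i; have := le_abs_self (f i x - ψ i); linarith)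
      simp only [Real.exp_zero, Finset.sum_const, Finset.card_univ, nsmul_eq_mul, mul_one] at h1
      have := le_abs_self (Real.log (Fintype.card ι))
      simp only [hL]
      linarith
  set F : (ι → ℝ) → ℝ := fun ψ => ∫ x, L ψ x ∂ν + ∑ i, w i * ψ i with hF
  have hIle : ∀ ψ ψ' t, (∀ i, ψ' i ≤ ψ i + t) → ∫ x, L ψ x ∂ν ≤ ∫ x, L ψ' x ∂ν + t := by
    intro ψ ψ' t h
    have : ∫ x, L ψ x ∂ν ≤ ∫ x, (L ψ' x + t) ∂ν :=
      integral_mono (hLi ψ) ((hLi ψ').add (integrable_const _)) fun x => hLle ψ ψ' t x h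
    rwa [integral_add (hLi ψ') (integrable_const _), integral_const, probReal_univ, one_smul]
      at this
  have hFc : Continuous F := by
    refine Continuous.add ?_ (by fun_prop)
    refine (LipschitzWith.of_le_add (f := fun ψ => ∫ x, L ψ x ∂ν) fun ψ ψ' => ?_).continuous
    refine hIle ψ ψ' _ fun i => ?_
    have := dist_le_pi_dist ψ ψ' i
    rw [Real.dist_eq, abs_le] at this
    linarith
  have hFadd : ∀ ψ c, F (fun i => ψ i + c) ≤ F ψ := fun ψ c => by
    have := hIle (fun i => ψ i + c) ψ (-c) (fun i => by simp)
    have h2 : ∑ i, w i * (ψ i + c) = ∑ i, w i * ψ i + c := by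
      simp only [mul_add, Finset.sum_add_distrib, ← Finset.sum_mul, hw1, one_mul]
    simp only [hF, h2]
    linarith
  set C : ℝ := ∑ j, |∫ x, f j x ∂ν| with hC
  have hFlow : ∀ ψ j i, ψ j = 0 → (∀ k, 0 ≤ ψ k) → -C + w i * ψ i ≤ F ψ := by
    intro ψ j i hj h0
    have h1 : ∫ x, f j x ∂ν ≤ ∫ x, L ψ x ∂ν :=
      integral_mono (hfi j) (hLi ψ) fun x => by have := hLlow ψ x j; rw [hj] at this; linarith
    have h2 : |∫ x, f j x ∂ν| ≤ C :=
      Finset.single_le_sum (f := fun j => |∫ x, f j x ∂ν|) (fun i _ => abs_nonneg _)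
        (Finset.mem_univ j)
    have h3 : w i * ψ i ≤ ∑ i, w i * ψ i :=
      Finset.single_le_sum (f := fun i => w i * ψ i)
        (fun i _ => mul_nonneg (hw i).le (h0 i)) (Finset.mem_univ i)
    have h4 := neg_abs_le (∫ x, f j x ∂ν)
    simp only [hF]
    linarith
  set R : ℝ := ∑ i, |C + F 0| / w i with hR
  have hRi : ∀ i, C + F 0 ≤ w i * R := fun i => by
    have h1 : |C + F 0| / w i ≤ R :=
      Finset.single_le_sum (f := fun i => |C + F 0| / w i)
        (fun i _ => div_nonneg (abs_nonneg _) (hw i).le) (Finset.mem_univ i)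
    rw [div_le_iff₀ (hw i)] at h1
    have := le_abs_self (C + F 0)
    linarith
  have hR0 : 0 ≤ R := Finset.sum_nonneg fun i _ => div_nonneg (abs_nonneg _) (hw i).le
  obtain ⟨ψ, -, hψ⟩ := (isCompact_Icc (a := (0 : ι → ℝ)) (b := fun _ => R)).exists_isMinOn
    ⟨0, le_rfl, fun _ => hR0⟩ hFc.continuousOn
  have hmin : ∀ ψ', F ψ ≤ F ψ' := by
    intro ψ'
    obtain ⟨j, hj⟩ := Finite.exists_min ψ'
    refine le_trans ?_ (hFadd ψ' (-ψ' j))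
    by_cases hbox : ∀ i, ψ' i + -ψ' j ≤ R
    · exact hψ ⟨fun i => by have := hj i; simp only [Pi.zero_apply]; linarith, hbox⟩
    · push Not at hbox
      obtain ⟨i, hi⟩ := hbox
      have h1 := hFlow (fun i => ψ' i + -ψ' j) j i (by simp)
        (fun k => by have := hj k; linarith)
      have h2 : F ψ ≤ F 0 := hψ ⟨le_rfl, fun _ => hR0⟩
      have h3 := hRi i
      have h4 := mul_lt_mul_of_pos_left hi (hw i)
      linarith
  set S : Ω → ℝ := fun x => ∑ i, Real.exp (f i x - ψ i) with hS
  have hSp : ∀ x, 0 < S x := fun x =>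
    Finset.sum_pos (fun i _ => Real.exp_pos _) Finset.univ_nonempty
  set h : ι → Ω → ℝ := fun i x => Real.exp (f i x - ψ i) / S x with hh
  have hhm : ∀ i, Measurable (h i) := fun i => by
    refine Measurable.div (Real.measurable_exp.comp ((hfm i).sub_const _)) ?_
    exact Finset.measurable_sum _ fun i _ => Real.measurable_exp.comp ((hfm i).sub_const _)
  have hhp : ∀ i x, 0 < h i x := fun i x => div_pos (Real.exp_pos _) (hSp x)
  have hh1 : ∀ x, ∑ i, h i x = 1 := fun x => by
    simp only [hh, ← Finset.sum_div]
    exact div_self (hSp x).ne'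
  have hhle : ∀ i x, h i x ≤ 1 := fun i x => by
    rw [← hh1 x]
    exact Finset.single_le_sum (f := fun i => h i x) (fun i _ => (hhp i x).le) (Finset.mem_univ i)
  have hhi : ∀ i, Integrable (h i) ν := fun i =>
    (integrable_const (1 : ℝ)).mono' (hhm i).aestronglyMeasurable
      (Filter.Eventually.of_forall fun x => by
        rw [Real.norm_eq_abs, abs_of_pos (hhp i x)]; exact hhle i x)
  refine ⟨ψ, h, hhm, fun i x => (hhp i x).le, hh1, ?_, ?_⟩
  · intro j
    set a := ∫ x, h j x ∂ν with ha
    -- first-order condition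
    have key : ∀ t : ℝ, 0 ≤ a * (Real.exp (-t) - 1) + t * w j := by
      intro t
      set ψ' : ι → ℝ := fun i => ψ i + if i = j then t else 0 with hψ'
      have hpt : ∀ x, L ψ' x ≤ L ψ x + h j x * (Real.exp (-t) - 1) := by
        intro x
        have hsum : ∑ i, Real.exp (f i x - ψ' i) = S x * (1 + h j x * (Real.exp (-t) - 1)) := by
          have e1 : ∀ i, Real.exp (f i x - ψ' i) = Real.exp (f i x - ψ i) +
              if i = j then Real.exp (f j x - ψ j) * (Real.exp (-t) - 1) else 0 := by
            intro i
            by_cases hij : i = j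
            · subst hij
              simp only [hψ', if_true]
              rw [show f i x - (ψ i + t) = (f i x - ψ i) + (-t) by ring, Real.exp_add]
              ring
            · simp [hψ', hij]
          simp only [e1, Finset.sum_add_distrib, Finset.sum_ite_eq', Finset.mem_univ, if_true]
          have : S x * h j x = Real.exp (f j x - ψ j) := by
            simp only [hh]; field_simp [(hSp x).ne']
          rw [mul_add, ← mul_assoc, this, mul_one]
        have hp : 0 < ∑ i, Real.exp (f i x - ψ' i) :=
          Finset.sum_pos (fun i _ => Real.exp_pos _) Finset.univ_nonempty
        have hp2 : 0 < 1 + h j x * (Real.exp (-t) - 1) := by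
          rw [hsum] at hp
          exact pos_of_mul_pos_right hp (hSp x).le
        simp only [hL]
        rw [hsum, Real.log_mul (hSp x).ne' hp2.ne']
        have := Real.log_le_sub_one_of_pos hp2
        simp only [hS] at this ⊢
        linarith
      have h1 : ∫ x, L ψ' x ∂ν ≤ ∫ x, L ψ x ∂ν + a * (Real.exp (-t) - 1) := by
        have := integral_mono (hLi ψ') ((hLi ψ).add ((hhi j).mul_const (Real.exp (-t) - 1))) hpt
        simp only [Pi.add_apply] at this
        rwa [integral_add (hLi ψ) ((hhi j).mul_const _), integral_mul_const] at this
      have h2 := hmin ψ'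
      have h3 : ∑ i, w i * ψ' i = ∑ i, w i * ψ i + w j * t := by
        simp [hψ', mul_add, Finset.sum_add_distrib]
      simp only [hF, h3] at h2
      linarith
    have hder : HasDerivAt (fun t : ℝ => a * (Real.exp (-t) - 1) + t * w j) (a * (-1) + w j) 0 := by
      have h1 : HasDerivAt (fun t : ℝ => Real.exp (-t)) (-1) 0 := by
        simpa using (hasDerivAt_neg (0 : ℝ)).exp
      have h2 : HasDerivAt (fun t : ℝ => t * w j) (w j) 0 := by
        simpa using (hasDerivAt_id (0 : ℝ)).mul_const (w j)
      exact ((h1.sub_const 1).const_mul a).add h2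
    have hloc : IsLocalMin (fun t : ℝ => a * (Real.exp (-t) - 1) + t * w j) 0 :=
      Filter.Eventually.of_forall fun t => by simpa using key t
    have := hloc.hasDerivAt_eq_zero hder
    linarith
  · intro x j
    have hz : ∀ i, f i x - ψ i = Real.log (h i x) + L ψ x := by
      intro i
      simp only [hh, hL]
      rw [Real.log_div (Real.exp_pos _).ne' (hSp x).ne', Real.log_exp]
      simp only [hS]
      ring
    have e1 : ∑ i, h i x * (f i x - ψ i) = ∑ i, h i x * Real.log (h i x) + L ψ x := by
      simp only [hz, mul_add, Finset.sum_add_distrib, ← Finset.sum_mul, hh1, one_mul]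
    have e2 : ∑ i : ι, (-1 : ℝ) ≤ ∑ i, h i x * Real.log (h i x) := by
      refine Finset.sum_le_sum fun i _ => ?_
      have h1 := Real.one_sub_inv_le_log_of_pos (hhp i x)
      have h2 := mul_le_mul_of_nonneg_left h1 (hhp i x).le
      rw [mul_sub, mul_inv_cancel₀ (hhp i x).ne'] at h2
      have := hhp i x
      linarith
    simp only [Finset.sum_const, Finset.card_univ, nsmul_eq_mul] at e2
    have := hLlow ψ x j
    rw [e1]
    linarith


lemma coupling_prob {d : ℕ} {α β : Measure (EuclideanSpace ℝ (Fin d))} [IsProbabilityMeasure α]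
    {π : Measure (EuclideanSpace ℝ (Fin d) × EuclideanSpace ℝ (Fin d))}
    (hπ : π ∈ Couplings α β) : IsProbabilityMeasure π := by
  constructor
  have h := congrArg (fun m => m Set.univ) hπ.1
  simpa [Measure.map_apply measurable_fst MeasurableSet.univ] using h

lemma coupling_fst {d : ℕ} {α β : Measure (EuclideanSpace ℝ (Fin d))}
    {π : Measure (EuclideanSpace ℝ (Fin d) × EuclideanSpace ℝ (Fin d))}
    (hπ : π ∈ Couplings α β) {f : EuclideanSpace ℝ (Fin d) → ℝ} (hf : Integrable f α) :
    Integrable (fun p => f p.1) π ∧ ∫ p, f p.1 ∂π = ∫ x, f x ∂α := by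
  rw [← hπ.1] at hf ⊢
  exact ⟨hf.comp_measurable measurable_fst,
    (integral_map measurable_fst.aemeasurable hf.aestronglyMeasurable).symm⟩

lemma coupling_snd {d : ℕ} {α β : Measure (EuclideanSpace ℝ (Fin d))}
    {π : Measure (EuclideanSpace ℝ (Fin d) × EuclideanSpace ℝ (Fin d))}
    (hπ : π ∈ Couplings α β) {f : EuclideanSpace ℝ (Fin d) → ℝ} (hf : Integrable f β) :
    Integrable (fun p => f p.2) π ∧ ∫ p, f p.2 ∂π = ∫ x, f x ∂β := by
  rw [← hπ.2] at hf ⊢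
  exact ⟨hf.comp_measurable measurable_snd,
    (integral_map measurable_snd.aemeasurable hf.aestronglyMeasurable).symm⟩

lemma cost_expand {d : ℕ} {α β : Measure (EuclideanSpace ℝ (Fin d))}
    (hα : Integrable (fun x => ‖x‖ ^ 2) α) (hβ : Integrable (fun x => ‖x‖ ^ 2) β)
    {π : Measure (EuclideanSpace ℝ (Fin d) × EuclideanSpace ℝ (Fin d))}
    (hπ : π ∈ Couplings α β) :
    Integrable (fun p => inner ℝ p.1 p.2) π ∧
    ∫ p, ‖p.1 - p.2‖ ^ 2 ∂π =
      ∫ x, ‖x‖ ^ 2 ∂α + ∫ x, ‖x‖ ^ 2 ∂β - 2 * ∫ p, inner ℝ p.1 p.2 ∂π := by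
  obtain ⟨i1, e1⟩ := coupling_fst hπ hα
  obtain ⟨i2, e2⟩ := coupling_snd hπ hβ
  have hi : Integrable (fun p : EuclideanSpace ℝ (Fin d) × EuclideanSpace ℝ (Fin d) =>
      inner ℝ p.1 p.2) π := by
    refine (i1.add i2).mono' (by fun_prop) (Filter.Eventually.of_forall fun p => ?_)
    have h1 := norm_inner_le_norm (𝕜 := ℝ) p.1 p.2
    simp only [Pi.add_apply]
    nlinarith [sq_nonneg (‖p.1‖ - ‖p.2‖), sq_nonneg ‖p.1‖, sq_nonneg ‖p.2‖]
  refine ⟨hi, ?_⟩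
  rw [← e1, ← e2, ← integral_add i1 i2, ← integral_const_mul,
    ← integral_sub (f := fun p => ‖p.1‖ ^ 2 + ‖p.2‖ ^ 2) (i1.add i2) (hi.const_mul 2)]
  refine integral_congr_ae (Filter.Eventually.of_forall fun p => ?_)
  simp only
  rw [norm_sub_sq_real]
  ring

lemma norm_integrable {d : ℕ} {α : Measure (EuclideanSpace ℝ (Fin d))} [IsProbabilityMeasure α]
    (hα : Integrable (fun x => ‖x‖ ^ 2) α) : Integrable (fun x => ‖x‖) α := by
  refine (hα.add (integrable_const (1 : ℝ))).mono' (by fun_prop)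
    (Filter.Eventually.of_forall fun x => ?_)
  simp only [Pi.add_apply, norm_norm]
  nlinarith [sq_nonneg (‖x‖ - 1), sq_nonneg ‖x‖]

lemma inner_integrable {d : ℕ} {α : Measure (EuclideanSpace ℝ (Fin d))} [IsProbabilityMeasure α]
    (hα : Integrable (fun x => ‖x‖ ^ 2) α) (v : EuclideanSpace ℝ (Fin d)) :
    Integrable (fun x => inner ℝ x v) α := by
  refine ((norm_integrable hα).mul_const ‖v‖).mono' (by fun_prop)
    (Filter.Eventually.of_forall fun x => norm_inner_le_norm x v)

lemma compact_sq_integrable {d : ℕ} {ρ : Measure (EuclideanSpace ℝ (Fin d))}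
    [IsProbabilityMeasure ρ] {K : Set (EuclideanSpace ℝ (Fin d))} (hK : IsCompact K)
    (hρ : ρ Kᶜ = 0) : Integrable (fun x => ‖x‖ ^ 2) ρ := by
  obtain ⟨C, hC⟩ := hK.isBounded.exists_norm_le
  refine (integrable_const (C ^ 2)).mono' (by fun_prop) ?_
  have : ∀ᵐ x ∂ρ, x ∈ K := hρ
  filter_upwards [this] with x hx
  rw [norm_pow, norm_norm]
  exact pow_le_pow_left₀ (norm_nonneg _) (hC x hx) 2

lemma exists_partition {d : ℕ} {ρ : Measure (EuclideanSpace ℝ (Fin d))}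
    {K : Set (EuclideanSpace ℝ (Fin d))} (hK : IsCompact K)
    (hρ : ρ Kᶜ = 0) {δ : ℝ} (hδ : 0 < δ) :
    ∃ (T : Finset (EuclideanSpace ℝ (Fin d)))
      (s : EuclideanSpace ℝ (Fin d) → EuclideanSpace ℝ (Fin d)), Measurable s ∧
      (∀ v ∈ T, ρ (s ⁻¹' {v}) ≠ 0) ∧ ∀ᵐ y ∂ρ, s y ∈ T ∧ ‖s y - y‖ ≤ δ := by
  classical
  set e := TopologicalSpace.denseSeq (EuclideanSpace ℝ (Fin d)) with he
  have hcov : K ⊆ ⋃ n, Metric.ball (e n) δ := by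
    intro x _
    obtain ⟨n, hn⟩ := (TopologicalSpace.denseRange_denseSeq
      (EuclideanSpace ℝ (Fin d))).exists_dist_lt x hδ
    exact Set.mem_iUnion.2 ⟨n, hn⟩
  obtain ⟨t, ht⟩ := hK.elim_finite_subcover _ (fun n => Metric.isOpen_ball) hcov
  obtain ⟨N, hN⟩ := t.exists_nat_subset_range
  set S := SimpleFunc.nearestPt e N with hS
  refine ⟨S.range.filter (fun v => ρ (S ⁻¹' {v}) ≠ 0), S, S.measurable, fun v hv => ?_, ?_⟩
  · exact (Finset.mem_filter.1 hv).2
  · have h1 : ∀ᵐ y ∂ρ, y ∈ K := hρ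
    have h2 : ∀ᵐ y ∂ρ, ∀ v ∈ S.range, ρ (S ⁻¹' {v}) = 0 → S y ≠ v := by
      rw [Filter.eventually_all_finset]
      intro v _
      by_cases h : ρ (S ⁻¹' {v}) = 0
      · have : ∀ᵐ y ∂ρ, y ∉ S ⁻¹' {v} :=
          measure_eq_zero_iff_ae_notMem.1 h
        filter_upwards [this] with y hy _ hyv
        exact hy hyv
      · exact Filter.Eventually.of_forall fun y h' => absurd h' h
    filter_upwards [h1, h2] with y hy1 hy2
    refine ⟨Finset.mem_filter.2 ⟨S.mem_range_self y, fun h => ?_⟩, ?_⟩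
    · exact hy2 _ (S.mem_range_self y) h rfl
    · obtain ⟨n, hn⟩ := Set.mem_iUnion.1 (ht hy1)
      obtain ⟨hnt, hyn⟩ := Set.mem_iUnion.1 hn
      have hle := SimpleFunc.edist_nearestPt_le e y
        (k := n) (N := N) (Finset.mem_range.1 (hN hnt)).le
      rw [edist_dist, edist_dist, ENNReal.ofReal_le_ofReal_iff dist_nonneg] at hle
      rw [← dist_eq_norm]
      rw [Metric.mem_ball, dist_comm] at hyn
      exact hle.trans hyn.le

set_option maxHeartbeats 1000000 in
lemma forward_aux {d : ℕ} (μ ν ρ : Measure (EuclideanSpace ℝ (Fin d)))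
    [IsProbabilityMeasure μ] [IsProbabilityMeasure ν] [IsProbabilityMeasure ρ]
    (hμ : Integrable (fun x => ‖x‖ ^ 2) μ) (hν : Integrable (fun y => ‖y‖ ^ 2) ν)
    (H : ∀ g : EuclideanSpace ℝ (Fin d) → ℝ, CConcave g →
        Integrable g μ → Integrable g ν → ∫ y, g y ∂ν ≤ ∫ x, g x ∂μ)
    {K : Set (EuclideanSpace ℝ (Fin d))} (hK : IsCompact K) (hρ : ρ Kᶜ = 0)
    {π : Measure (EuclideanSpace ℝ (Fin d) × EuclideanSpace ℝ (Fin d))}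
    (hπ : π ∈ Couplings μ ρ) {δ ε' : ℝ} (hδ : 0 < δ) (hε' : 0 < ε') :
    ∃ π' ∈ Couplings ν ρ, ∫ p, inner ℝ p.1 p.2 ∂π - (∫ x, ‖x‖ ^ 2 ∂μ) / 2 +
      (∫ x, ‖x‖ ^ 2 ∂ν) / 2 - δ * ∫ x, ‖x‖ ∂μ - δ * ∫ x, ‖x‖ ∂ν - ε' ≤
        ∫ p, inner ℝ p.1 p.2 ∂π' := by
  classical
  have hρ2 := compact_sq_integrable hK hρ
  obtain ⟨T, s, hs, hT, hsT⟩ := exists_partition hK hρ hδ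
  have hπp := coupling_prob hπ
  -- the pieces
  set A : T → Set (EuclideanSpace ℝ (Fin d)) := fun v => s ⁻¹' {(v : EuclideanSpace ℝ (Fin d))}
    with hA
  have hAm : ∀ v, MeasurableSet (A v) := fun v => hs (measurableSet_singleton _)
  have hAd : Pairwise (Function.onFun Disjoint A) := by
    intro v v' hvv'
    refine Set.disjoint_left.2 fun y hy hy' => hvv' (Subtype.ext ?_)
    exact (show s y = v from hy).symm.trans hy'
  have hAρ : ∀ v, ρ (A v) ≠ 0 := fun v => hT v v.2
  have hsum : ∑ v : T, ρ.restrict (A v) = ρ := by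
    have h1 : ρ.restrict (⋃ v, A v) = ρ := by
      refine Measure.restrict_eq_self_of_ae_mem ?_
      filter_upwards [hsT] with y hy
      exact Set.mem_iUnion.2 ⟨⟨s y, hy.1⟩, rfl⟩
    rw [← Measure.sum_fintype, ← Measure.restrict_iUnion hAd hAm, h1]
  set w : T → ℝ := fun v => (ρ (A v)).toReal with hw
  have hw0 : ∀ v, 0 < w v := fun v => ENNReal.toReal_pos (hAρ v) (measure_ne_top _ _)
  have hw1 : ∑ v, w v = 1 := by
    have h := congrArg (fun m => m Set.univ) hsum
    simp only [Measure.coe_finsetSum, Finset.sum_apply, Measure.restrict_apply_univ,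
      measure_univ] at h
    simp only [hw]
    rw [← ENNReal.toReal_sum (fun v _ => measure_ne_top _ _), h, ENNReal.toReal_one]
  have hne : Nonempty T := by
    by_contra hcon
    rw [not_nonempty_iff] at hcon
    simp at hw1
  set n : ℝ := (Fintype.card T : ℝ) with hn
  have hn0 : 0 < n := by simp only [hn]; exact_mod_cast Fintype.card_pos
  set ε := ε' / n with hε
  have hε0 : 0 < ε := div_pos hε' hn0
  have hεn : ε * n = ε' := by rw [hε]; field_simp
  obtain ⟨ψ, h, hhm, hh0, hh1, hhw, hmax⟩ := softmax_exists ν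
    (fun (v : T) x => inner ℝ x (v : EuclideanSpace ℝ (Fin d)) / ε)
    (fun v => by fun_prop) (fun v => (inner_integrable hν _).div_const _) w hw0 hw1
  set Ψ : T → ℝ := fun v => ε * ψ v with hΨ
  set M : EuclideanSpace ℝ (Fin d) → ℝ := fun x =>
    Finset.univ.sup' Finset.univ_nonempty
      (fun v : T => inner ℝ x (v : EuclideanSpace ℝ (Fin d)) - Ψ v) with hM
  have hMle : ∀ x (v : T), inner ℝ x (v : EuclideanSpace ℝ (Fin d)) - Ψ v ≤ M x := fun x v =>
    Finset.le_sup' (fun v : T => inner ℝ x (v : EuclideanSpace ℝ (Fin d)) - Ψ v)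
      (Finset.mem_univ v)
  have hMex : ∀ x, ∃ v : T, M x = inner ℝ x (v : EuclideanSpace ℝ (Fin d)) - Ψ v := fun x => by
    obtain ⟨v, -, hv⟩ := Finset.exists_mem_eq_sup' Finset.univ_nonempty
      (fun v : T => inner ℝ x (v : EuclideanSpace ℝ (Fin d)) - Ψ v)
    exact ⟨v, hv⟩
  have hMc : ConvexOn ℝ Set.univ M := by
    refine ⟨convex_univ, fun x _ y _ a b ha hb hab => ?_⟩
    obtain ⟨v, hv⟩ := hMex (a • x + b • y)
    rw [hv, inner_add_left, real_inner_smul_left, real_inner_smul_left, smul_eq_mul, smul_eq_mul]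
    have h1 := mul_le_mul_of_nonneg_left (hMle x v) ha
    have h2 := mul_le_mul_of_nonneg_left (hMle y v) hb
    have h3 : Ψ v = a * Ψ v + b * Ψ v := by rw [← add_mul, hab, one_mul]
    linarith
  have hMcont : Continuous M := by
    refine Continuous.finset_sup'_apply _ fun v _ => ?_
    fun_prop
  have hMint : ∀ (α : Measure (EuclideanSpace ℝ (Fin d))) [IsProbabilityMeasure α],
      Integrable (fun x => ‖x‖ ^ 2) α → Integrable M α := by
    intro α _ hα
    have hb : Integrable (fun x => ∑ v : T, |inner ℝ x (v : EuclideanSpace ℝ (Fin d)) - Ψ v|) α :=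
      integrable_finsetSum _ fun v _ => ((inner_integrable hα _).sub (integrable_const _)).abs
    refine hb.mono' hMcont.aestronglyMeasurable (Filter.Eventually.of_forall fun x => ?_)
    obtain ⟨v, hv⟩ := hMex x
    rw [hv, Real.norm_eq_abs]
    exact Finset.single_le_sum
      (f := fun v : T => |inner ℝ x (v : EuclideanSpace ℝ (Fin d)) - Ψ v|)
      (fun i _ => abs_nonneg _) (Finset.mem_univ v)
  clear_value M
  have hMμ := hMint μ hμ
  have hMν := hMint ν hν
  -- use of the hypothesis
  have hH : (∫ x, ‖x‖ ^ 2 ∂ν) / 2 - ∫ x, M x ∂ν ≤ (∫ x, ‖x‖ ^ 2 ∂μ) / 2 - ∫ x, M x ∂μ := by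
    have := H (fun x => ‖x‖ ^ 2 / 2 - M x) (by simpa [CConcave] using hMc)
      ((hμ.div_const 2).sub hMμ) ((hν.div_const 2).sub hMν)
    rwa [integral_sub (hν.div_const 2) hMν, integral_sub (hμ.div_const 2) hMμ,
      integral_div, integral_div] at this
  -- upper bound for π
  have hup : ∫ p, inner ℝ p.1 p.2 ∂π ≤ ∫ x, M x ∂μ + δ * ∫ x, ‖x‖ ∂μ + ∑ v, w v * Ψ v := by
    set Φ : EuclideanSpace ℝ (Fin d) → ℝ := fun y => ∑ v, (A v).indicator (fun _ => Ψ v) y with hΦ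
    have hΦi : Integrable Φ ρ :=
      integrable_finsetSum _ fun v _ => (integrable_const _).indicator (hAm v)
    have hΦe : ∫ y, Φ y ∂ρ = ∑ v, w v * Ψ v := by
      simp only [hΦ]
      rw [integral_finsetSum _ fun v _ => (integrable_const _).indicator (hAm v)]
      refine Finset.sum_congr rfl fun v _ => ?_
      rw [integral_indicator_const _ (hAm v), smul_eq_mul]
      rfl
    obtain ⟨j1, e1⟩ := coupling_fst hπ hMμ
    obtain ⟨j2, e2⟩ := coupling_fst hπ ((norm_integrable hμ).const_mul δ)
    obtain ⟨j3, e3⟩ := coupling_snd hπ hΦi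
    have j12 : Integrable (fun p : EuclideanSpace ℝ (Fin d) × EuclideanSpace ℝ (Fin d) =>
        M p.1 + δ * ‖p.1‖) π := j1.add j2
    have j123 : Integrable (fun p : EuclideanSpace ℝ (Fin d) × EuclideanSpace ℝ (Fin d) =>
        M p.1 + δ * ‖p.1‖ + Φ p.2) π := j12.add j3
    rw [← integral_const_mul, ← hΦe, ← e1, ← e2, ← e3, ← integral_add j1 j2,
      ← integral_add j12 j3]
    refine integral_mono_ae (cost_expand hμ hρ2 hπ).1 j123 ?_
    have hsT' : ∀ᵐ p ∂π, s p.2 ∈ T ∧ ‖s p.2 - p.2‖ ≤ δ := by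
      rw [← hπ.2] at hsT
      exact ae_of_ae_map measurable_snd.aemeasurable hsT
    filter_upwards [hsT'] with p hp
    have hΦp : Φ p.2 = Ψ ⟨s p.2, hp.1⟩ := by
      simp only [hΦ]
      rw [Finset.sum_eq_single (⟨s p.2, hp.1⟩ : T)]
      · exact Set.indicator_of_mem (by simp [hA]) _
      · intro v _ hv
        refine Set.indicator_of_notMem (fun hmem => hv ?_) _
        exact Subtype.ext (show s p.2 = v from hmem).symm
      · simp
    rw [hΦp]
    have h1 := hMle p.1 ⟨s p.2, hp.1⟩
    have h2 : inner ℝ p.1 (p.2 - s p.2) ≤ ‖p.1‖ * ‖p.2 - s p.2‖ := real_inner_le_norm _ _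
    rw [inner_sub_right, norm_sub_rev] at h2
    have h3 := mul_le_mul_of_nonneg_left hp.2 (norm_nonneg p.1)
    linarith
  -- the new coupling
  set κ : T → Measure (EuclideanSpace ℝ (Fin d)) := fun v =>
    ν.withDensity (fun x => ENNReal.ofReal (h v x)) with hκ
  have hhle : ∀ v x, h v x ≤ 1 := fun v x => by
    rw [← hh1 x]
    exact Finset.single_le_sum (f := fun v => h v x) (fun i _ => hh0 i x) (Finset.mem_univ v)
  have hhi : ∀ v, Integrable (h v) ν := fun v =>
    (integrable_const (1 : ℝ)).mono' (hhm v).aestronglyMeasurable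
      (Filter.Eventually.of_forall fun x => by
        rw [Real.norm_eq_abs, abs_of_nonneg (hh0 v x)]; exact hhle v x)
  have hκu : ∀ v, κ v Set.univ = ρ (A v) := fun v => by
    simp only [hκ]
    rw [withDensity_apply _ MeasurableSet.univ, Measure.restrict_univ,
      ← ofReal_integral_eq_lintegral_ofReal (hhi v)
        (Filter.Eventually.of_forall fun x => hh0 v x), hhw v]
    exact ENNReal.ofReal_toReal (measure_ne_top _ _)
  have hκf : ∀ v, IsFiniteMeasure (κ v) := fun v => ⟨by rw [hκu v]; exact measure_lt_top _ _⟩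
  have hκsum : ∑ v, κ v = ν := by
    ext B hB
    simp only [Measure.coe_finsetSum, Finset.sum_apply, hκ]
    simp only [withDensity_apply _ hB]
    rw [← lintegral_finsetSum _ (fun v _ => (hhm v).ennreal_ofReal)]
    have : ∀ x, ∑ v, ENNReal.ofReal (h v x) = 1 := fun x => by
      rw [← ENNReal.ofReal_sum_of_nonneg (fun v _ => hh0 v x), hh1 x, ENNReal.ofReal_one]
    simp only [this, lintegral_one, Measure.restrict_apply_univ]
  set P : T → Measure (EuclideanSpace ℝ (Fin d) × EuclideanSpace ℝ (Fin d)) := fun v =>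
    (κ v).prod ((ρ (A v))⁻¹ • ρ.restrict (A v)) with hP
  have hPf : ∀ v, (P v).map Prod.fst = κ v := fun v => by
    simp only [hP]
    rw [Measure.map_fst_prod, Measure.smul_apply, Measure.restrict_apply_univ, smul_eq_mul,
      ENNReal.inv_mul_cancel (hAρ v) (measure_ne_top _ _), one_smul]
  have hPs : ∀ v, (P v).map Prod.snd = ρ.restrict (A v) := fun v => by
    simp only [hP]
    rw [Measure.map_snd_prod, hκu v, smul_smul,
      ENNReal.mul_inv_cancel (hAρ v) (measure_ne_top _ _), one_smul]
  have hπ' : (∑ v, P v) ∈ Couplings ν ρ := by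
    constructor
    · rw [← Measure.mapₗ_apply_of_measurable measurable_fst, map_sum]
      simp only [Measure.mapₗ_apply_of_measurable measurable_fst, hPf, hκsum]
    · rw [← Measure.mapₗ_apply_of_measurable measurable_snd, map_sum]
      simp only [Measure.mapₗ_apply_of_measurable measurable_snd, hPs, hsum]
  refine ⟨_, hπ', ?_⟩
  have hin := (cost_expand hν hρ2 hπ').1
  have hPi : ∀ {F : EuclideanSpace ℝ (Fin d) × EuclideanSpace ℝ (Fin d) → ℝ},
      Integrable F (∑ v, P v) → ∀ v, Integrable F (P v) := fun hF v =>
    (integrable_finsetSum_measure.1 hF) v (Finset.mem_univ v)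
  have hnν := norm_integrable hν
  have hlin : ∀ v : T, Integrable (fun x : EuclideanSpace ℝ (Fin d) =>
      inner ℝ x (v : EuclideanSpace ℝ (Fin d)) - δ * ‖x‖) ν := fun v =>
    (inner_integrable hν _).sub (hnν.const_mul δ)
  have hmulint : ∀ v : T, ∀ {f : EuclideanSpace ℝ (Fin d) → ℝ}, Integrable f ν →
      Integrable (fun x => h v x * f x) ν := fun v f hf =>
    hf.norm.mono' ((hhm v).aestronglyMeasurable.mul hf.aestronglyMeasurable)
      (Filter.Eventually.of_forall fun x => by
        rw [norm_mul, Real.norm_eq_abs (h v x), abs_of_nonneg (hh0 v x)]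
        exact mul_le_of_le_one_left (norm_nonneg _) (hhle v x))
  have hpiece : ∀ v : T, ∫ x, h v x * (inner ℝ x (v : EuclideanSpace ℝ (Fin d)) - δ * ‖x‖) ∂ν ≤
      ∫ p, inner ℝ p.1 p.2 ∂(P v) := by
    intro v
    have e1 : ∫ x, h v x * (inner ℝ x (v : EuclideanSpace ℝ (Fin d)) - δ * ‖x‖) ∂ν =
        ∫ p, (inner ℝ p.1 (v : EuclideanSpace ℝ (Fin d)) - δ * ‖p.1‖) ∂(P v) := by
      have : ∫ p, (inner ℝ p.1 (v : EuclideanSpace ℝ (Fin d)) - δ * ‖p.1‖) ∂(P v) =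
          ∫ x, (inner ℝ x (v : EuclideanSpace ℝ (Fin d)) - δ * ‖x‖) ∂((P v).map Prod.fst) :=
        (integral_map (f := fun x : EuclideanSpace ℝ (Fin d) =>
          inner ℝ x (v : EuclideanSpace ℝ (Fin d)) - δ * ‖x‖)
          measurable_fst.aemeasurable (by fun_prop)).symm
      rw [this, hPf v]
      simp only [hκ]
      rw [integral_withDensity_eq_integral_toReal_smul (hhm v).ennreal_ofReal
        (Filter.Eventually.of_forall fun x => ENNReal.ofReal_lt_top)]
      simp only [ENNReal.toReal_ofReal (hh0 v _), smul_eq_mul]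
    rw [e1]
    refine integral_mono_ae (hPi (coupling_fst hπ' (hlin v)).1 v) (hPi hin v) ?_
    have hae : ∀ᵐ p ∂(P v), p.2 ∈ A v ∧ ‖s p.2 - p.2‖ ≤ δ := by
      have : ∀ᵐ y ∂((P v).map Prod.snd), y ∈ A v ∧ ‖s y - y‖ ≤ δ := by
        rw [hPs v]
        filter_upwards [ae_restrict_mem (hAm v), ae_restrict_of_ae hsT] with y h1 h2
        exact ⟨h1, h2.2⟩
      exact ae_of_ae_map measurable_snd.aemeasurable this
    filter_upwards [hae] with p hp
    have hsv : s p.2 = v := hp.1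
    have h2 : inner ℝ p.1 (v - p.2) ≤ ‖p.1‖ * ‖v - p.2‖ := real_inner_le_norm _ _
    rw [inner_sub_right] at h2
    have h3 := mul_le_mul_of_nonneg_left hp.2 (norm_nonneg p.1)
    rw [hsv] at h3
    linarith
  have hlow : ∫ x, M x ∂ν + ∑ v, w v * Ψ v - ε' - δ * ∫ x, ‖x‖ ∂ν ≤
      ∫ p, inner ℝ p.1 p.2 ∂(∑ v, P v) := by
    rw [integral_finsetSum_measure (fun v _ => hPi hin v)]
    refine le_trans ?_ (Finset.sum_le_sum fun v _ => hpiece v)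
    have e2 : ∀ v, w v * Ψ v = ∫ x, h v x * Ψ v ∂ν := fun v => by
      rw [integral_mul_const, hhw v]
    simp only [e2]
    rw [← integral_finsetSum _ fun v _ => hmulint v (hlin v),
      ← integral_finsetSum _ fun v _ => (hhi v).mul_const _]
    have hs1 : Integrable (fun x => ∑ v, h v x * Ψ v) ν :=
      integrable_finsetSum _ fun v _ => (hhi v).mul_const _
    have hs2 : Integrable (fun x => ∑ v, h v x *
        (inner ℝ x (v : EuclideanSpace ℝ (Fin d)) - δ * ‖x‖)) ν :=
      integrable_finsetSum _ fun v _ => hmulint v (hlin v)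
    have e3 : ∫ x, M x ∂ν + ∫ x, ∑ v, h v x * Ψ v ∂ν - ε' - δ * ∫ x, ‖x‖ ∂ν =
        ∫ x, (M x + ∑ v, h v x * Ψ v - ε' - δ * ‖x‖) ∂ν := by
      rw [integral_sub (f := fun x => M x + ∑ v, h v x * Ψ v - ε')
          ((hMν.add hs1).sub (integrable_const _)) (hnν.const_mul δ),
        integral_sub (f := fun x => M x + ∑ v, h v x * Ψ v) (hMν.add hs1) (integrable_const _),
        integral_add hMν hs1, integral_const_mul, integral_const, probReal_univ, one_smul]
    rw [e3]
    refine integral_mono (((hMν.add hs1).sub (integrable_const _)).sub (hnν.const_mul δ)) hs2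
      fun x => ?_
    simp only
    obtain ⟨v, hv⟩ := hMex x
    have h1 := mul_le_mul_of_nonneg_left (hmax x v) hε0.le
    have h2 : ε * (inner ℝ x (v : EuclideanSpace ℝ (Fin d)) / ε - ψ v - (Fintype.card T : ℝ)) =
        M x - ε' := by
      rw [hv, ← hεn]
      simp only [hΨ, hn]
      field_simp
    have h3 : ε * ∑ v, h v x * (inner ℝ x (v : EuclideanSpace ℝ (Fin d)) / ε - ψ v) =
        ∑ v, h v x * (inner ℝ x (v : EuclideanSpace ℝ (Fin d)) - δ * ‖x‖)
          - ∑ v, h v x * Ψ v + δ * ‖x‖ := by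
      have : δ * ‖x‖ = ∑ v, h v x * (δ * ‖x‖) := by rw [← Finset.sum_mul, hh1, one_mul]
      rw [this, ← Finset.sum_sub_distrib, ← Finset.sum_add_distrib, Finset.mul_sum]
      refine Finset.sum_congr rfl fun v _ => ?_
      rw [← this]
      simp only [hΨ]
      field_simp
      ring
    rw [h2, h3] at h1
    linarith
  linarith

lemma forward {d : ℕ} (μ ν ρ : Measure (EuclideanSpace ℝ (Fin d)))
    [IsProbabilityMeasure μ] [IsProbabilityMeasure ν] [IsProbabilityMeasure ρ]
    (hμ : Integrable (fun x => ‖x‖ ^ 2) μ) (hν : Integrable (fun y => ‖y‖ ^ 2) ν)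
    (H : ∀ g : EuclideanSpace ℝ (Fin d) → ℝ, CConcave g →
        Integrable g μ → Integrable g ν → ∫ y, g y ∂ν ≤ ∫ x, g x ∂μ)
    {K : Set (EuclideanSpace ℝ (Fin d))} (hK : IsCompact K) (hρ : ρ Kᶜ = 0) :
    W2sq ν ρ ≤ W2sq μ ρ := by
  have hρ2 := compact_sq_integrable hK hρ
  refine le_csInf ⟨_, μ.prod ρ, ⟨by simp, by simp⟩, rfl⟩ ?_
  rintro r ⟨π, hπ, rfl⟩
  refine le_of_forall_pos_le_add fun η hη => ?_
  set m := ∫ x, ‖x‖ ∂μ with hm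
  set m' := ∫ x, ‖x‖ ∂ν with hm'
  have hm0 : 0 ≤ m := integral_nonneg fun _ => norm_nonneg _
  have hm0' : 0 ≤ m' := integral_nonneg fun _ => norm_nonneg _
  set δ := η / (4 * (m + m' + 1)) with hδ
  have hδ0 : 0 < δ := by positivity
  have hδe : δ * (m + m' + 1) = η / 4 := by rw [hδ]; field_simp
  obtain ⟨π', hπ', hle⟩ := forward_aux μ ν ρ hμ hν H hK hρ hπ hδ0 (show 0 < η / 4 by positivity)
  have h1 : W2sq ν ρ ≤ ∫ p, ‖p.1 - p.2‖ ^ 2 ∂π' := by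
    refine csInf_le ⟨0, ?_⟩ ⟨π', hπ', rfl⟩
    rintro r ⟨π, -, rfl⟩
    exact integral_nonneg fun _ => by positivity
  rw [(cost_expand hν hρ2 hπ').2] at h1
  rw [(cost_expand hμ hρ2 hπ).2]
  nlinarith

/-- Measurable selection of a maximizing slope among the first `N + 1`. -/
lemma argmax_exists {d : ℕ} (y : ℕ → EuclideanSpace ℝ (Fin d))
    (c : EuclideanSpace ℝ (Fin d) → ℝ) (hc : Measurable c) (N : ℕ) :
    ∃ j : EuclideanSpace ℝ (Fin d) → EuclideanSpace ℝ (Fin d), Measurable j ∧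
      (∀ x, ∃ k ≤ N, j x = y k) ∧
      ∀ x, ∀ k ≤ N, inner ℝ x (y k) + c (y k) ≤ inner ℝ x (j x) + c (j x) := by
  induction N with
  | zero =>
    refine ⟨fun _ => y 0, measurable_const, fun x => ⟨0, le_rfl, rfl⟩, fun x k hk => ?_⟩
    obtain rfl : k = 0 := by omega
    exact le_rfl
  | succ N ih =>
    classical
    obtain ⟨j, hj, hj1, hj2⟩ := ih
    have hm : MeasurableSet {x | inner ℝ x (j x) + c (j x) ≤
        inner ℝ x (y (N + 1)) + c (y (N + 1))} := by
      refine measurableSet_le ((measurable_id.inner hj).add (hc.comp hj)) ?_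
      fun_prop
    refine ⟨fun x => if inner ℝ x (j x) + c (j x) ≤ inner ℝ x (y (N + 1)) + c (y (N + 1))
      then y (N + 1) else j x, Measurable.ite hm measurable_const hj, fun x => ?_,
      fun x k hk => ?_⟩
    · beta_reduce
      split_ifs with h
      · exact ⟨N + 1, le_rfl, rfl⟩
      · obtain ⟨k, hk, e⟩ := hj1 x
        exact ⟨k, by omega, e⟩
    · beta_reduce
      rcases Nat.lt_or_ge N k with h | h
      · obtain rfl : k = N + 1 := by omega
        split_ifs with h'
        · exact le_rfl
        · exact (not_le.1 h').le
      · split_ifs with h'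
        · exact (hj2 x k h).trans h'
        · exact hj2 x k h

lemma backward_aux {d : ℕ} (μ ν : Measure (EuclideanSpace ℝ (Fin d)))
    [IsProbabilityMeasure μ] [IsProbabilityMeasure ν]
    (hμ : Integrable (fun x => ‖x‖ ^ 2) μ) (hν : Integrable (fun y => ‖y‖ ^ 2) ν)
    (H : ∀ ρ : Measure (EuclideanSpace ℝ (Fin d)), IsProbabilityMeasure ρ →
        (∃ K : Set (EuclideanSpace ℝ (Fin d)), IsCompact K ∧ ρ Kᶜ = 0) →
        W2sq ν ρ ≤ W2sq μ ρ)
    (y : ℕ → EuclideanSpace ℝ (Fin d))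
    (c : EuclideanSpace ℝ (Fin d) → ℝ) (hc : Measurable c) (N : ℕ)
    (j : EuclideanSpace ℝ (Fin d) → EuclideanSpace ℝ (Fin d)) (hj : Measurable j)
    (hj1 : ∀ x, ∃ k ≤ N, j x = y k)
    (hj2 : ∀ x, ∀ k ≤ N, inner ℝ x (y k) + c (y k) ≤ inner ℝ x (j x) + c (j x))
    (hMμ : Integrable (fun x => inner ℝ x (j x) + c (j x)) μ)
    (hMν : Integrable (fun x => inner ℝ x (j x) + c (j x)) ν) :
    (∫ x, ‖x‖ ^ 2 ∂ν) / 2 - ∫ x, (inner ℝ x (j x) + c (j x)) ∂ν ≤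
      (∫ x, ‖x‖ ^ 2 ∂μ) / 2 - ∫ x, (inner ℝ x (j x) + c (j x)) ∂μ := by
  classical
  set ρ := μ.map j with hρ
  have hρp : IsProbabilityMeasure ρ := Measure.isProbabilityMeasure_map hj.aemeasurable
  set Y : Finset (EuclideanSpace ℝ (Fin d)) := (Finset.range (N + 1)).image y with hY
  have hjY : ∀ x, j x ∈ Y := fun x => by
    obtain ⟨k, hk, e⟩ := hj1 x
    exact Finset.mem_image.2 ⟨k, Finset.mem_range.2 (by omega), e.symm⟩
  have hρY : ρ (Y : Set (EuclideanSpace ℝ (Fin d)))ᶜ = 0 := by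
    rw [hρ, Measure.map_apply hj Y.measurableSet.compl]
    convert measure_empty (μ := μ)
    ext x
    simpa using hjY x
  have hK : IsCompact (Y : Set (EuclideanSpace ℝ (Fin d))) := Y.finite_toSet.isCompact
  have hρ2 := compact_sq_integrable hK hρY
  have hW := H ρ hρp ⟨Y, hK, hρY⟩
  have haeY : ∀ᵐ v ∂ρ, v ∈ Y := by
    have : ∀ᵐ v ∂ρ, v ∈ (Y : Set (EuclideanSpace ℝ (Fin d))) := hρY
    simpa using this
  have hci : Integrable c ρ := by
    refine (integrable_const (∑ v ∈ Y, |c v|)).mono' hc.aestronglyMeasurable ?_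
    filter_upwards [haeY] with v hv
    exact Finset.single_le_sum (f := fun v => |c v|) (fun i _ => abs_nonneg _) hv
  -- upper bound for `W2sq μ ρ`
  set π₀ := μ.map (fun x => (x, j x)) with hπ₀
  have hgm : Measurable (fun x => (x, j x)) := measurable_id.prodMk hj
  have hπ₀c : π₀ ∈ Couplings μ ρ := by
    constructor
    · rw [hπ₀, Measure.map_map measurable_fst hgm]
      exact Measure.map_id
    · rw [hπ₀, Measure.map_map measurable_snd hgm]
      rfl
  have hup : W2sq μ ρ ≤ ∫ p, ‖p.1 - p.2‖ ^ 2 ∂π₀ := by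
    refine csInf_le ⟨0, ?_⟩ ⟨π₀, hπ₀c, rfl⟩
    rintro r ⟨π, -, rfl⟩
    exact integral_nonneg fun _ => by positivity
  obtain ⟨i0, e0⟩ := cost_expand hμ hρ2 hπ₀c
  obtain ⟨i1, e1⟩ := coupling_snd hπ₀c hci
  have hsum : ∫ p, inner ℝ p.1 p.2 ∂π₀ + ∫ v, c v ∂ρ = ∫ x, (inner ℝ x (j x) + c (j x)) ∂μ := by
    rw [← e1, ← integral_add i0 i1]
    exact integral_map hgm.aemeasurable (i0.add i1).aestronglyMeasurable
  -- lower bound for `W2sq ν ρ`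
  have hlow : ∫ x, ‖x‖ ^ 2 ∂ν + ∫ x, ‖x‖ ^ 2 ∂ρ -
      2 * (∫ x, (inner ℝ x (j x) + c (j x)) ∂ν - ∫ v, c v ∂ρ) ≤ W2sq ν ρ := by
    refine le_csInf ⟨_, ν.prod ρ, ⟨by simp, by simp⟩, rfl⟩ ?_
    rintro r ⟨π, hπ, rfl⟩
    obtain ⟨k0, f0⟩ := cost_expand hν hρ2 hπ
    obtain ⟨k1, f1⟩ := coupling_snd hπ hci
    obtain ⟨k2, f2⟩ := coupling_fst hπ hMν
    have : ∫ p, (inner ℝ p.1 p.2 + c p.2) ∂π ≤ ∫ p, (inner ℝ p.1 (j p.1) + c (j p.1)) ∂π := by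
      refine integral_mono_ae (k0.add k1) k2 ?_
      have hae : ∀ᵐ p ∂π, p.2 ∈ Y := by
        rw [← hπ.2] at haeY
        exact ae_of_ae_map measurable_snd.aemeasurable haeY
      filter_upwards [hae] with p hp
      obtain ⟨k, hk, e⟩ := Finset.mem_image.1 hp
      have := hj2 p.1 k (by have := Finset.mem_range.1 hk; omega)
      rw [e] at this
      exact this
    rw [integral_add k0 k1, f1, f2] at this
    rw [f0]
    linarith
  rw [e0] at hup
  linarith

lemma exists_slopes {d : ℕ} (φ : EuclideanSpace ℝ (Fin d) → ℝ) (hφ : ConvexOn ℝ Set.univ φ) :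
    ∃ (y : ℕ → EuclideanSpace ℝ (Fin d)) (c : EuclideanSpace ℝ (Fin d) → ℝ), Measurable c ∧
      (∀ n x, inner ℝ x (y n) + c (y n) ≤ φ x) ∧
      ∀ x, ∀ a < φ x, ∃ n, a < inner ℝ x (y n) + c (y n) := by
  classical
  have hcont : Continuous φ := by
    rw [← continuousOn_univ]
    exact hφ.continuousOn isOpen_univ
  obtain ⟨l, b, hle, hsup⟩ := hφ.real_univ_sSup_of_nat_affine_eq hcont.lowerSemicontinuous
  set y : ℕ → EuclideanSpace ℝ (Fin d) := fun n => (InnerProductSpace.toDual ℝ _).symm (l n) with hy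
  have hyl : ∀ n x, inner ℝ x (y n) = l n x := fun n x => by
    rw [real_inner_comm, hy, InnerProductSpace.toDual_symm_apply]
  have hle' : ∀ n x, l n x + b n ≤ φ x := fun n x => hle n x
  set c0 : EuclideanSpace ℝ (Fin d) → ℝ := fun v => ⨅ x, (φ x - inner ℝ x v) with hc0
  have hbdd : ∀ n, BddBelow (Set.range fun x => φ x - inner ℝ x (y n)) := fun n =>
    ⟨b n, by rintro _ ⟨x, rfl⟩; have := hle' n x; simp only [hyl]; linarith⟩
  set c : EuclideanSpace ℝ (Fin d) → ℝ := (Set.range y).indicator c0 with hc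
  have hcy : ∀ n, c (y n) = c0 (y n) := fun n => Set.indicator_of_mem (Set.mem_range_self n) _
  refine ⟨y, c, ?_, fun n x => ?_, fun x a ha => ?_⟩
  · have hr : (Set.range y).Countable := Set.countable_range y
    have : Countable (Set.range y) := hr.to_subtype
    refine measurable_of_restrict_of_restrict_compl hr.measurableSet
      (measurable_of_countable _) ?_
    have : (Set.range y)ᶜ.domRestrict c = fun _ => 0 := by
      ext v
      exact Set.indicator_of_notMem v.2 _
    rw [this]
    exact measurable_const
  · have h1 : c0 (y n) ≤ φ x - inner ℝ x (y n) := ciInf_le (hbdd n) x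
    rw [hcy]
    linarith
  · have h1 : φ x = ⨆ n, (l n x + b n) := by
      rw [← hsup, iSup_apply]
      rfl
    rw [h1] at ha
    obtain ⟨n, hn⟩ := exists_lt_of_lt_ciSup ha
    refine ⟨n, hn.trans_le ?_⟩
    have h2 : b n ≤ c0 (y n) := le_ciInf fun x => by
      have := hle' n x
      rw [hyl]; linarith
    rw [hcy, hyl]
    linarith

lemma backward {d : ℕ} (μ ν : Measure (EuclideanSpace ℝ (Fin d)))
    [IsProbabilityMeasure μ] [IsProbabilityMeasure ν]
    (hμ : Integrable (fun x => ‖x‖ ^ 2) μ) (hν : Integrable (fun y => ‖y‖ ^ 2) ν)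
    (H : ∀ ρ : Measure (EuclideanSpace ℝ (Fin d)), IsProbabilityMeasure ρ →
        (∃ K : Set (EuclideanSpace ℝ (Fin d)), IsCompact K ∧ ρ Kᶜ = 0) →
        W2sq ν ρ ≤ W2sq μ ρ)
    (g : EuclideanSpace ℝ (Fin d) → ℝ) (hg : CConcave g)
    (hgμ : Integrable g μ) (hgν : Integrable g ν) : ∫ y, g y ∂ν ≤ ∫ x, g x ∂μ := by
  set φ : EuclideanSpace ℝ (Fin d) → ℝ := fun x => ‖x‖ ^ 2 / 2 - g x with hφ
  have hφc : ConvexOn ℝ Set.univ φ := hg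
  obtain ⟨y, c, hc, hle, hlt⟩ := exists_slopes φ hφc
  choose j hj hj1 hj2 using argmax_exists y c hc
  set M : ℕ → EuclideanSpace ℝ (Fin d) → ℝ := fun N x => inner ℝ x (j N x) + c (j N x) with hM
  have hMm : ∀ N, Measurable (M N) := fun N => by
    exact (measurable_id.inner (hj N)).add (hc.comp (hj N))
  have hMle : ∀ N x, M N x ≤ φ x := fun N x => by
    obtain ⟨k, -, e⟩ := hj1 N x
    simp only [hM, e]
    exact hle k x
  have hMge : ∀ N x, ∀ k ≤ N, inner ℝ x (y k) + c (y k) ≤ M N x := fun N x k hk => hj2 N x k hk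
  have hbound : ∀ N x, ‖M N x‖ ≤ |φ x| + |inner ℝ x (y 0) + c (y 0)| := fun N x => by
    have h1 := hMle N x
    have h2 := hMge N x 0 (Nat.zero_le _)
    have h3 := le_abs_self (φ x)
    have h4 := neg_abs_le (inner ℝ x (y 0) + c (y 0))
    have h5 := abs_nonneg (φ x)
    have h6 := abs_nonneg (inner ℝ x (y 0) + c (y 0))
    rw [Real.norm_eq_abs, abs_le]
    constructor <;> linarith
  have hlim : ∀ x, Filter.Tendsto (fun N => M N x) Filter.atTop (nhds (φ x)) := fun x => by
    refine tendsto_order.2 ⟨fun a ha => ?_, fun a ha => ?_⟩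
    · obtain ⟨n, hn⟩ := hlt x a ha
      filter_upwards [Filter.eventually_ge_atTop n] with N hN
      exact hn.trans_le (hMge N x n hN)
    · exact Filter.Eventually.of_forall fun N => (hMle N x).trans_lt ha
  have main : ∀ (α : Measure (EuclideanSpace ℝ (Fin d))) [IsProbabilityMeasure α],
      Integrable (fun x => ‖x‖ ^ 2) α → Integrable g α → (∀ N, Integrable (M N) α) ∧
      Filter.Tendsto (fun N => (∫ x, ‖x‖ ^ 2 ∂α) / 2 - ∫ x, M N x ∂α) Filter.atTop
        (nhds (∫ x, g x ∂α)) := by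
    intro α _ hα hgα
    have hφi : Integrable φ α := (hα.div_const 2).sub hgα
    have hB : Integrable (fun x => |φ x| + |inner ℝ x (y 0) + c (y 0)|) α :=
      hφi.abs.add ((inner_integrable hα _).add (integrable_const _)).abs
    refine ⟨fun N => hB.mono' (hMm N).aestronglyMeasurable
      (Filter.Eventually.of_forall (hbound N)), ?_⟩
    have e : ∫ x, g x ∂α = (∫ x, ‖x‖ ^ 2 ∂α) / 2 - ∫ x, φ x ∂α := by
      simp only [hφ]
      rw [integral_sub (hα.div_const 2) hgα, integral_div]
      ring
    rw [e]
    refine tendsto_const_nhds.sub ?_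
    exact tendsto_integral_of_dominated_convergence _ (fun N => (hMm N).aestronglyMeasurable) hB
      (fun N => Filter.Eventually.of_forall (hbound N)) (Filter.Eventually.of_forall hlim)
  obtain ⟨iμ, tμ⟩ := main μ hμ hgμ
  obtain ⟨iν, tν⟩ := main ν hν hgν
  refine le_of_tendsto_of_tendsto' tν tμ fun N => ?_
  exact backward_aux μ ν hμ hν H y c hc N (j N) (hj N) (hj1 N) (hj2 N) (iμ N) (iν N)

theorem stmt5 (d : ℕ) (hd : 1 ≤ d)
    (μ ν : Measure (EuclideanSpace ℝ (Fin d)))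
    [IsProbabilityMeasure μ] [IsProbabilityMeasure ν]
    (hμ : Integrable (fun x => ‖x‖ ^ 2) μ) (hν : Integrable (fun y => ‖y‖ ^ 2) ν) :
    (∀ g : EuclideanSpace ℝ (Fin d) → ℝ, CConcave g →
        Integrable g μ → Integrable g ν → ∫ y, g y ∂ν ≤ ∫ x, g x ∂μ) ↔
      ∀ ρ : Measure (EuclideanSpace ℝ (Fin d)), IsProbabilityMeasure ρ →
        (∃ K : Set (EuclideanSpace ℝ (Fin d)), IsCompact K ∧ ρ Kᶜ = 0) →
        W2sq ν ρ ≤ W2sq μ ρ := by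
  constructor
  · rintro H ρ hρp ⟨K, hK, hρ⟩
    exact forward μ ν ρ hμ hν H hK hρ
  · intro H g hg hgμ hgν
    exact backward μ ν hμ hν H g hg hgμ hgν
end
end
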